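/- Let φ : 𝔻² → 𝔻² be holomorphic and C²-smooth on the closed bidisc, and let β > -1. Then the composition operator C_φ is bounded on the weighted Bergman space A²_β(𝔻²) if and only if for every ζ ∈ 𝕋² with φ(ζ) ∈ 𝕋², the complex derivative d_ζφ (the 2×2 complex Jacobian matrix at ζ) is invertible. -/

import Mathlib

open MeasureTheory Metric Set ENNReal

noncomputable section

/-- The open unit polydisc in `ℂⁿ`. -/
def polydisc (n : ℕ) : Set (Fin n → ℂ) := {z | ∀ j, ‖z j‖ < 1}

/-- The closed unit polydisc in `ℂⁿ`. -/
def closedPolydisc (n : ℕ) : Set (Fin n → ℂ) := {z | ∀ j, ‖z j‖ ≤ 1}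

/-- The distinguished boundary (torus) of the polydisc. -/
def torus (n : ℕ) : Set (Fin n → ℂ) := {z | ∀ j, ‖z j‖ = 1}

/-- The weighted Bergman measure `V_β` on the polydisc: the product of the measures
`dA_β(z) = (β+1)(1-|z|²)^β dA(z)`, where `dA` is normalized area measure on the unit disc. -/
def Vbeta (n : ℕ) (β : ℝ) : Measure (Fin n → ℂ) :=
  (volume.restrict (polydisc n)).withDensity
    (fun z => ENNReal.ofReal (∏ j, ((β + 1) * (1 - ‖z j‖ ^ 2) ^ β / Real.pi)))

/-- The `(i,j)` entry `∂Φ_i/∂z_j(ζ)` of the complex Jacobian matrix of `Φ` at `ζ`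
(computed via the derivative of the extension to the closed polydisc). -/
def jacEntry (n : ℕ) (Φ : (Fin n → ℂ) → (Fin n → ℂ)) (ζ : Fin n → ℂ) (i j : Fin n) : ℂ :=
  fderivWithin ℝ Φ (closedPolydisc n) ζ (Pi.single j 1) i

/-- The composition operator `C_Φ` is bounded on the weighted Bergman space `A²_β(𝔻ⁿ)`. -/
def bddBergman (n : ℕ) (β : ℝ) (Φ : (Fin n → ℂ) → (Fin n → ℂ)) : Prop :=
  ∃ C > (0:ℝ), ∀ f : (Fin n → ℂ) → ℂ, DifferentiableOn ℂ f (polydisc n) →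
    ∫⁻ z, ENNReal.ofReal (‖f (Φ z)‖ ^ 2) ∂(Vbeta n β) ≤
      ENNReal.ofReal C * ∫⁻ z, ENNReal.ofReal (‖f z‖ ^ 2) ∂(Vbeta n β)

/-! Testing `C_φ` on powers of Szegő kernels shows that boundedness forces the `V_β`-measure of a
set which `φ` maps close to a boundary point `a` of the torus, at scale `δ`, to be
`O(δ ^ (2 (β + 2)))`. Conversely, the sub-mean value property of `|f|²` on the polydiscs with
centre `u` and radii `(1 - |u_i|) / 2` gives boundedness as soon as the preimages of these
polydiscs have measure `O(∏ i, (1 - |u_i|) ^ (β + 2))`.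

If the Jacobian is invertible wherever `φ` maps the torus to itself, this Carleson bound is local by
compactness. A point `ζ` with `φ(ζ) ∈ 𝕋²` lies on the torus, since a coordinate inside the disc
would give a vanishing column of the Jacobian. The map is expanding near `ζ`, some permutation
`σ` has all `∂φ_i/∂z_{σ i}(ζ) ≠ 0`, and Schwarz–Pick gives `1 - |z_{σ i}| ≲ 1 - |φ_i(z)|`, so
the preimages are bounded slice by slice, by Fubini. If only one `|φ_i(ζ)|` equals `1`, the Hopf
lemma supplies a nonzero `∂φ_i/∂z_j(ζ)` and one such slice estimate suffices.

For the converse, at `ζ` and `φ(ζ)` in `𝕋²` all numbers `conj (φ_i(ζ)) ∂φ_i/∂z_j(ζ) ζ_j` are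
nonnegative, so a singular Jacobian has a real kernel vector `v` in these coordinates: `dφ` kills
the tangential direction `(i ζ_j v_j)`. Since `φ` is `C²`, it maps a box of size `δ` within `O(δ)`
of `φ(ζ)` even after a tangential displacement along `v` of order `√δ`. There is room for
`δ ^ (-1/2)` disjoint boxes of this kind, which together violate the Carleson bound. -/

open scoped ComplexConjugate Topology NNReal

section Polydisc

variable {n : ℕ}

lemma polydisc_eq_ball : polydisc n = ball 0 1 := by
  ext z
  simp [polydisc, pi_norm_lt_iff]

lemma closedPolydisc_eq_closedBall : closedPolydisc n = closedBall 0 1 := by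
  ext z
  simp [closedPolydisc, pi_norm_le_iff_of_nonneg]

lemma isOpen_polydisc : IsOpen (polydisc n) :=
  polydisc_eq_ball (n := n) ▸ isOpen_ball

lemma measurableSet_polydisc : MeasurableSet (polydisc n) :=
  isOpen_polydisc.measurableSet

lemma isCompact_closedPolydisc : IsCompact (closedPolydisc n) :=
  closedPolydisc_eq_closedBall (n := n) ▸ isCompact_closedBall 0 1

lemma convex_closedPolydisc : Convex ℝ (closedPolydisc n) :=
  closedPolydisc_eq_closedBall (n := n) ▸ convex_closedBall 0 1

lemma polydisc_subset_closedPolydisc : polydisc n ⊆ closedPolydisc n :=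
  fun _ hz j => (hz j).le

lemma torus_subset_closedPolydisc : torus n ⊆ closedPolydisc n :=
  fun _ hz j => (hz j).le

lemma closure_polydisc : closure (polydisc n) = closedPolydisc n := by
  rw [polydisc_eq_ball, closedPolydisc_eq_closedBall, closure_ball 0 one_ne_zero]

lemma uniqueDiffOn_closedPolydisc : UniqueDiffOn ℝ (closedPolydisc n) := by
  refine uniqueDiffOn_convex convex_closedPolydisc ⟨0, ?_⟩
  exact mem_interior.2 ⟨_, polydisc_subset_closedPolydisc, isOpen_polydisc, by simp [polydisc]⟩

end Polydisc

section DiskMeasure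

variable {β : ℝ}

/-- The density `(β + 1)(1 - |z|²)^β / π` of the weighted area measure `dA_β` on the unit disc. -/
def diskDensity (β : ℝ) (z : ℂ) : ℝ := (β + 1) * (1 - ‖z‖ ^ 2) ^ β / Real.pi

/-- The weighted area measure `dA_β` of the unit disc, as a measure on `ℂ`. -/
def diskMeasure (β : ℝ) : Measure ℂ :=
  (volume.restrict (ball 0 1)).withDensity fun z => ENNReal.ofReal (diskDensity β z)

instance : SigmaFinite (diskMeasure β) := SigmaFinite.withDensity_ofReal _

lemma measurable_diskDensity : Measurable (diskDensity β) := by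
  unfold diskDensity
  fun_prop

lemma one_sub_norm_sq_pos {z : ℂ} (hz : ‖z‖ < 1) : 0 < 1 - ‖z‖ ^ 2 := by
  nlinarith [norm_nonneg z]

lemma diskDensity_nonneg (hβ : -1 < β) {z : ℂ} (hz : ‖z‖ < 1) : 0 ≤ diskDensity β z := by
  have h₁ := one_sub_norm_sq_pos hz
  have h₂ : 0 < β + 1 := by linarith
  unfold diskDensity
  positivity

lemma ae_diskMeasure_norm_lt_one : ∀ᵐ w ∂(diskMeasure β), ‖w‖ < 1 := by
  refine (withDensity_absolutelyContinuous _ _).ae_le ?_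
  filter_upwards [ae_restrict_mem measurableSet_ball] with w hw
  exact mem_ball_zero_iff.1 hw

lemma integrableOn_mul_one_sub_sq_rpow (hβ : -1 < β) :
    IntegrableOn (fun r : ℝ => r * (1 - r ^ 2) ^ β) (Ioo 0 1) := by
  have hβ' : 0 < β + 1 := by linarith
  have hderiv : ∀ r ∈ Ioo (0 : ℝ) 1, HasDerivAt (fun r : ℝ => -(1 - r ^ 2) ^ (β + 1))
      (2 * (β + 1) * (r * (1 - r ^ 2) ^ β)) r := fun r hr => by
    have hr' : 0 < 1 - r ^ 2 := by nlinarith [hr.1, hr.2]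
    refine ((((hasDerivAt_id r).pow 2).const_sub 1).rpow_const
      (p := β + 1) (.inl hr'.ne')).neg.congr_deriv ?_
    simp only [id, Nat.cast_ofNat, Pi.pow_apply, add_sub_cancel_right]
    ring
  have hcont : ContinuousOn (fun r : ℝ => -(1 - r ^ 2) ^ (β + 1)) (Icc 0 1) :=
    (ContinuousOn.rpow_const (by fun_prop) fun _ _ => .inr hβ'.le).neg
  have hint := (intervalIntegral.integrableOn_deriv_of_nonneg hcont hderiv fun r hr => by
    have hr' : 0 < 1 - r ^ 2 := by nlinarith [hr.1, hr.2]
    have := hr.1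
    positivity).mono_set Ioo_subset_Ioc_self
  exact (integrable_const_mul_iff (by simp [hβ'.ne']) _).1 hint

lemma isFiniteMeasure_diskMeasure (hβ : -1 < β) : IsFiniteMeasure (diskMeasure β) := by
  refine isFiniteMeasure_withDensity_ofReal (Integrable.hasFiniteIntegral ?_)
  have h : IntegrableOn (fun z : ℂ => (1 - ‖z‖ ^ 2) ^ β) (ball 0 1) := by
    rw [integrableOn_fun_norm_addHaar volume (f := fun r => (1 - r ^ 2) ^ β)]
    simpa [Complex.finrank_real_complex] using integrableOn_mul_one_sub_sq_rpow hβ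
  exact (h.const_mul (β + 1)).div_const Real.pi

end DiskMeasure

section ProductMeasure

lemma lmarginal_prod {ι : Type*} [DecidableEq ι] {X : ι → Type*} [∀ i, MeasurableSpace (X i)]
    (μ : ∀ i, Measure (X i)) [∀ i, SigmaFinite (μ i)] {f : ∀ i, X i → ℝ≥0∞}
    (hf : ∀ i, Measurable (f i)) (s : Finset ι) :
    (∫⋯∫⁻_s, fun x => ∏ i ∈ s, f i (x i) ∂μ) = fun _ => ∏ i ∈ s, ∫⁻ t, f i t ∂μ i := by
  induction s using Finset.induction with
  | empty => simp
  | insert i s hi ih =>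
    have hmeas (t : Finset ι) : Measurable fun x : ∀ i, X i => ∏ i ∈ t, f i (x i) := by fun_prop
    have hinner : (fun x => ∫⁻ t, ∏ j ∈ insert i s, f j (Function.update x i t j) ∂μ i) =
        fun x => (∫⁻ t, f i t ∂μ i) * ∏ j ∈ s, f j (x j) := by
      funext x
      rw [← lintegral_mul_const _ (hf i)]
      refine lintegral_congr fun t => ?_
      rw [Finset.prod_insert hi, Function.update_self]
      congr 1
      refine Finset.prod_congr rfl fun j hj => ?_
      rw [Function.update_of_ne (ne_of_mem_of_not_mem hj hi)]
    funext x
    rw [lmarginal_insert' _ (hmeas _) hi, hinner, Finset.prod_insert hi, ← congrFun ih x]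
    exact lintegral_const_mul _ ((hmeas s).comp measurable_updateFinset)

lemma lintegral_pi_prod {ι : Type*} [Fintype ι] {X : ι → Type*} [∀ i, MeasurableSpace (X i)]
    (μ : ∀ i, Measure (X i)) [∀ i, SigmaFinite (μ i)] {f : ∀ i, X i → ℝ≥0∞}
    (hf : ∀ i, Measurable (f i)) :
    ∫⁻ x, ∏ i, f i (x i) ∂Measure.pi μ = ∏ i, ∫⁻ t, f i t ∂μ i := by
  classical
  cases isEmpty_or_nonempty (∀ i, X i) with
  | inl h =>
    obtain ⟨i, hi⟩ := isEmpty_pi.1 h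
    rw [lintegral_of_isEmpty, Finset.prod_eq_zero (Finset.mem_univ i)]
    exact lintegral_of_isEmpty _ _
  | inr h => rw [lintegral_eq_lmarginal_univ h.some, lmarginal_prod μ hf]

lemma ofReal_prod_diskDensity {n : ℕ} {β : ℝ} (hβ : -1 < β) {z : Fin n → ℂ}
    (hz : z ∈ polydisc n) :
    ENNReal.ofReal (∏ j, ((β + 1) * (1 - ‖z j‖ ^ 2) ^ β / Real.pi)) =
      ∏ j, ENNReal.ofReal (diskDensity β (z j)) :=
  ENNReal.ofReal_prod_of_nonneg fun j _ => diskDensity_nonneg hβ (hz j)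

lemma Vbeta_eq_pi (n : ℕ) {β : ℝ} (hβ : -1 < β) :
    Vbeta n β = Measure.pi fun _ => diskMeasure β := by
  refine (Measure.pi_eq fun s hs => ?_).symm
  have hpoly : polydisc n = univ.pi fun _ => ball 0 1 := by
    ext z
    simp [polydisc]
  have hdens : Measurable fun w : ℂ => ENNReal.ofReal (diskDensity β w) :=
    measurable_diskDensity.ennreal_ofReal
  calc Vbeta n β (univ.pi s)
      = ∫⁻ z in univ.pi s ∩ polydisc n, ∏ j, ENNReal.ofReal (diskDensity β (z j)) := by
        rw [Vbeta, withDensity_apply _ (.univ_pi hs), Measure.restrict_restrict (.univ_pi hs)]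
        exact setLIntegral_congr_fun ((MeasurableSet.univ_pi hs).inter measurableSet_polydisc)
          fun z hz => ofReal_prod_diskDensity hβ hz.2
    _ = ∏ j, ∫⁻ w in s j ∩ ball 0 1, ENNReal.ofReal (diskDensity β w) := by
        rw [hpoly, ← pi_inter_distrib, volume_pi, Measure.restrict_pi_pi,
          lintegral_pi_prod _ fun _ => hdens]
    _ = ∏ j, diskMeasure β (s j) := by
        refine Finset.prod_congr rfl fun j _ => ?_
        rw [diskMeasure, withDensity_apply _ (hs j), Measure.restrict_restrict (hs j)]

lemma ae_Vbeta_mem_polydisc (n : ℕ) (β : ℝ) : ∀ᵐ z ∂(Vbeta n β), z ∈ polydisc n :=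
  (withDensity_absolutelyContinuous _ _).ae_le (ae_restrict_mem measurableSet_polydisc)

lemma isFiniteMeasure_Vbeta (n : ℕ) {β : ℝ} (hβ : -1 < β) : IsFiniteMeasure (Vbeta n β) := by
  have := isFiniteMeasure_diskMeasure hβ
  rw [Vbeta_eq_pi n hβ]
  infer_instance

end ProductMeasure

section ForelliRudin

variable {a u : ℂ} {β : ℝ}

/-- The involutive automorphism `u ↦ (a - u) / (1 - a̅ u)` of the unit disc, for `|a| < 1`. -/
def mobius (a u : ℂ) : ℂ := (a - u) / (1 - conj a * u)

lemma one_sub_conj_mul_ne_zero (ha : ‖a‖ < 1) (hu : ‖u‖ ≤ 1) : 1 - conj a * u ≠ 0 := fun h => by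
  have hnorm : ‖a‖ * ‖u‖ = 1 := by
    rw [← RCLike.norm_conj a, ← norm_mul, ← sub_eq_zero.1 h, norm_one]
  nlinarith [norm_nonneg a, norm_nonneg u]

lemma norm_one_sub_conj_mul_le_two (ha : ‖a‖ ≤ 1) (hu : ‖u‖ ≤ 1) : ‖1 - conj a * u‖ ≤ 2 :=
  calc ‖1 - conj a * u‖ ≤ ‖(1 : ℂ)‖ + ‖conj a * u‖ := norm_sub_le _ _
    _ ≤ 2 := by
      rw [norm_one, norm_mul, RCLike.norm_conj]
      nlinarith [norm_nonneg a, norm_nonneg u]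

lemma ofReal_one_sub_norm_sq (a : ℂ) : ((1 - ‖a‖ ^ 2 : ℝ) : ℂ) = 1 - conj a * a := by
  rw [mul_comm, Complex.mul_conj, Complex.normSq_eq_norm_sq]
  push_cast
  rfl

lemma one_sub_norm_mobius_sq (ha : ‖a‖ < 1) (hu : ‖u‖ ≤ 1) :
    1 - ‖mobius a u‖ ^ 2 = (1 - ‖a‖ ^ 2) * (1 - ‖u‖ ^ 2) / ‖1 - conj a * u‖ ^ 2 := by
  have h : ‖1 - conj a * u‖ ^ 2 ≠ 0 := by simpa using one_sub_conj_mul_ne_zero ha hu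
  rw [mobius, norm_div, div_pow, eq_div_iff h, sub_mul, div_mul_cancel₀ _ h]
  simp only [Complex.sq_norm, Complex.normSq_apply, Complex.sub_re, Complex.sub_im, Complex.one_re,
    Complex.one_im, Complex.mul_re, Complex.mul_im, Complex.conj_re, Complex.conj_im]
  ring

lemma one_sub_conj_mul_mobius (ha : ‖a‖ < 1) (hu : ‖u‖ ≤ 1) :
    1 - conj a * mobius a u = ((1 - ‖a‖ ^ 2 : ℝ) : ℂ) / (1 - conj a * u) := by
  have h := one_sub_conj_mul_ne_zero ha hu
  rw [mobius, ofReal_one_sub_norm_sq]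
  field_simp
  ring

lemma norm_mobius_lt_one (ha : ‖a‖ < 1) (hu : ‖u‖ < 1) : ‖mobius a u‖ < 1 := by
  have hpos : 0 < 1 - ‖mobius a u‖ ^ 2 := by
    rw [one_sub_norm_mobius_sq ha hu.le]
    have := one_sub_norm_sq_pos ha
    have := one_sub_norm_sq_pos hu
    have := norm_pos_iff.2 (one_sub_conj_mul_ne_zero ha hu.le)
    positivity
  nlinarith [norm_nonneg (mobius a u)]

lemma mobius_mobius (ha : ‖a‖ < 1) (hu : ‖u‖ < 1) : mobius a (mobius a u) = u := by
  have h := one_sub_conj_mul_ne_zero ha hu.le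
  have h' := one_sub_conj_mul_ne_zero ha (norm_mobius_lt_one ha hu).le
  have hdef : mobius a u * (1 - conj a * u) = a - u := div_mul_cancel₀ _ h
  rw [mobius, div_eq_iff h']
  apply mul_right_cancel₀ h
  linear_combination (-1 + u * conj a) * hdef

lemma bijOn_mobius (ha : ‖a‖ < 1) : BijOn (mobius a) (ball 0 1) (ball 0 1) := by
  have hmaps : MapsTo (mobius a) (ball 0 1) (ball 0 1) := fun u hu =>
    mem_ball_zero_iff.2 (norm_mobius_lt_one ha (mem_ball_zero_iff.1 hu))
  have hinv : LeftInvOn (mobius a) (mobius a) (ball 0 1) := fun u hu =>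
    mobius_mobius ha (mem_ball_zero_iff.1 hu)
  exact InvOn.bijOn ⟨hinv, hinv⟩ hmaps hmaps

lemma hasDerivAt_mobius (ha : ‖a‖ < 1) (hu : ‖u‖ < 1) :
    HasDerivAt (mobius a) (-((1 - ‖a‖ ^ 2 : ℝ) : ℂ) / (1 - conj a * u) ^ 2) u := by
  refine (((hasDerivAt_id u).const_sub a).div (((hasDerivAt_id u).const_mul (conj a)).const_sub 1)
    (one_sub_conj_mul_ne_zero ha hu.le)).congr_deriv ?_
  rw [ofReal_one_sub_norm_sq]
  simp only [id_eq, mul_one]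
  ring

lemma abs_det_restrictScalars_toSpanSingleton (c : ℂ) :
    |((ContinuousLinearMap.toSpanSingleton ℂ c).restrictScalars ℝ).det| = ‖c‖ ^ 2 := by
  rw [ContinuousLinearMap.det, ContinuousLinearMap.coe_restrictScalars,
    LinearMap.det_restrictScalars]
  simp [Algebra.norm_complex_apply, Complex.normSq_eq_norm_sq]

lemma lintegral_ball_comp_mobius (ha : ‖a‖ < 1) (f : ℂ → ℝ≥0∞) :
    ∫⁻ w in ball 0 1, f w = ∫⁻ u in ball 0 1,
      ENNReal.ofReal ((1 - ‖a‖ ^ 2) ^ 2 / ‖1 - conj a * u‖ ^ 4) * f (mobius a u) := by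
  have hbij := bijOn_mobius ha
  conv_lhs => rw [← hbij.image_eq]
  rw [lintegral_image_eq_lintegral_abs_det_fderiv_mul volume measurableSet_ball
    (fun u hu => ((hasDerivAt_mobius ha (mem_ball_zero_iff.1 hu)).hasFDerivAt.restrictScalars
      ℝ).hasFDerivWithinAt) hbij.injOn]
  refine setLIntegral_congr_fun measurableSet_ball fun u _ => ?_
  simp only [abs_det_restrictScalars_toSpanSingleton, norm_div, norm_neg, norm_pow,
    Complex.norm_real, Real.norm_of_nonneg (one_sub_norm_sq_pos ha).le, div_pow, ← pow_mul]

lemma lintegral_diskMeasure {f : ℂ → ℝ≥0∞} (hf : Measurable f) :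
    ∫⁻ w, f w ∂(diskMeasure β) =
      ∫⁻ w in ball 0 1, ENNReal.ofReal (diskDensity β w) * f w :=
  lintegral_withDensity_eq_lintegral_mul _ measurable_diskDensity.ennreal_ofReal hf

lemma rpow_kernel_mobius_mul_le (hβ : -1 < β) {s : ℝ} (hs : 2 * β + 4 ≤ s) (ha : ‖a‖ < 1)
    (hu : ‖u‖ < 1) :
    (1 - ‖a‖ ^ 2) ^ 2 / ‖1 - conj a * u‖ ^ 4 *
        (diskDensity β (mobius a u) * ‖1 - conj a * mobius a u‖ ^ (-s)) ≤
      2 ^ (s - 2 * β - 4) * (1 - ‖a‖ ^ 2) ^ (β + 2 - s) * diskDensity β u := by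
  have hA := one_sub_norm_sq_pos ha
  have ht := one_sub_norm_sq_pos hu
  have hq : 0 < ‖1 - conj a * u‖ := norm_pos_iff.2 (one_sub_conj_mul_ne_zero ha hu.le)
  have hq2 := norm_one_sub_conj_mul_le_two ha.le hu.le
  have hβ' : 0 < β + 1 := by linarith
  rw [diskDensity, diskDensity, one_sub_norm_mobius_sq ha hu.le, one_sub_conj_mul_mobius ha hu.le,
    norm_div, Complex.norm_real, Real.norm_of_nonneg hA.le]
  generalize 1 - ‖a‖ ^ 2 = A at *
  generalize 1 - ‖u‖ ^ 2 = t at *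
  generalize ‖1 - conj a * u‖ = q at *
  calc A ^ 2 / q ^ 4 * ((β + 1) * (A * t / q ^ 2) ^ β / Real.pi * (A / q) ^ (-s))
      = q ^ (s - 2 * β - 4) * A ^ (β + 2 - s) * ((β + 1) * t ^ β / Real.pi) := by
        have hAexp : A ^ (β + 2 - s) = A ^ 2 * A ^ β * A ^ (-s) := by
          rw [← Real.rpow_natCast A 2, ← Real.rpow_add hA, ← Real.rpow_add hA]
          congr 1
          push_cast
          ring
        have hqexp : q ^ (s - 2 * β - 4) = q ^ s * (q ^ (2 * β))⁻¹ * (q ^ 4)⁻¹ := by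
          rw [← Real.rpow_natCast q 4, ← Real.rpow_neg hq.le, ← Real.rpow_neg hq.le,
            ← Real.rpow_add hq, ← Real.rpow_add hq]
          congr 1
        rw [Real.div_rpow (by positivity) (by positivity), Real.mul_rpow hA.le ht.le,
          Real.div_rpow hA.le hq.le, Real.rpow_neg hq.le, ← Real.rpow_natCast q 2,
          ← Real.rpow_mul hq.le, hAexp, hqexp]
        push_cast
        field_simp
    _ ≤ 2 ^ (s - 2 * β - 4) * A ^ (β + 2 - s) * ((β + 1) * t ^ β / Real.pi) := by
        gcongr
        linarith

lemma exists_lintegral_rpow_kernel_le (hβ : -1 < β) {s : ℝ} (hs : 2 * β + 4 ≤ s) :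
    ∃ B : ℝ≥0, ∀ a : ℂ, ‖a‖ < 1 →
      ∫⁻ w, ENNReal.ofReal (‖1 - conj a * w‖ ^ (-s)) ∂(diskMeasure β) ≤
        B * ENNReal.ofReal ((1 - ‖a‖) ^ (β + 2 - s)) := by
  have := isFiniteMeasure_diskMeasure hβ
  refine ⟨(2 ^ (s - 2 * β - 4) : ℝ).toNNReal * measureUnivNNReal (diskMeasure β),
    fun a ha => ?_⟩
  have hA := one_sub_norm_sq_pos ha
  set K : ℝ := 2 ^ (s - 2 * β - 4) * (1 - ‖a‖ ^ 2) ^ (β + 2 - s)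
  calc ∫⁻ w, ENNReal.ofReal (‖1 - conj a * w‖ ^ (-s)) ∂(diskMeasure β)
      = ∫⁻ u in ball 0 1, ENNReal.ofReal ((1 - ‖a‖ ^ 2) ^ 2 / ‖1 - conj a * u‖ ^ 4) *
          (ENNReal.ofReal (diskDensity β (mobius a u)) *
            ENNReal.ofReal (‖1 - conj a * mobius a u‖ ^ (-s))) := by
        rw [lintegral_diskMeasure (by fun_prop), lintegral_ball_comp_mobius ha]
    _ ≤ ∫⁻ u in ball 0 1, ENNReal.ofReal K * ENNReal.ofReal (diskDensity β u) := by
        refine setLIntegral_mono' measurableSet_ball fun u hu => ?_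
        have hu' := mem_ball_zero_iff.1 hu
        rw [← ENNReal.ofReal_mul (diskDensity_nonneg hβ (norm_mobius_lt_one ha hu')),
          ← ENNReal.ofReal_mul (by positivity), ← ENNReal.ofReal_mul (by positivity)]
        exact ENNReal.ofReal_le_ofReal (rpow_kernel_mobius_mul_le hβ hs ha hu')
    _ = ENNReal.ofReal K * diskMeasure β univ := by
        rw [lintegral_const_mul _ measurable_diskDensity.ennreal_ofReal, diskMeasure,
          withDensity_apply _ .univ, Measure.restrict_univ]
    _ ≤ _ := by
        rw [ENNReal.ofReal_mul (by positivity), ENNReal.coe_mul, coe_measureUnivNNReal,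
          mul_right_comm]
        have hle : (1 - ‖a‖ ^ 2) ^ (β + 2 - s) ≤ (1 - ‖a‖) ^ (β + 2 - s) :=
          Real.rpow_le_rpow_of_nonpos (by linarith) (by nlinarith [norm_nonneg a]) (by linarith)
        exact mul_le_mul' le_rfl (ENNReal.ofReal_le_ofReal hle)

end ForelliRudin

section CarlesonBox

variable {β : ℝ}

/-- The part of the Carleson region of size `d` at `x` cut out of the plane: the points within
distance `d` of `x` whose distance to the complement of the unit disc is at most `d`. -/
def carlesonBox (x : ℂ) (d : ℝ) : Set ℂ := {z | ‖z - x‖ ≤ d ∧ 1 - ‖z‖ ≤ d}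

lemma measurableSet_carlesonBox (x : ℂ) (d : ℝ) : MeasurableSet (carlesonBox x d) :=
  (measurableSet_le (f := fun z : ℂ => ‖z - x‖) (by fun_prop) measurable_const).inter
    (measurableSet_le (f := fun z : ℂ => 1 - ‖z‖) (by fun_prop) measurable_const)

lemma exists_norm_eq_one_norm_sub_eq {x : ℂ} (hx : ‖x‖ ≤ 1) :
    ∃ η : ℂ, ‖η‖ = 1 ∧ ‖η - x‖ = 1 - ‖x‖ := by
  rcases eq_or_ne x 0 with rfl | h
  · exact ⟨1, by simp, by simp⟩
  · have hη : ‖x / (‖x‖ : ℂ)‖ = 1 := by simp [h]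
    refine ⟨x / (‖x‖ : ℂ), hη, ?_⟩
    have hsplit : x / (‖x‖ : ℂ) - x = ((1 - ‖x‖ : ℝ) : ℂ) * (x / (‖x‖ : ℂ)) := by
      have : (‖x‖ : ℂ) ≠ 0 := by simpa using h
      push_cast
      field_simp
    rw [hsplit, norm_mul, hη, Complex.norm_real, Real.norm_of_nonneg (by linarith), mul_one]

lemma norm_one_sub_conj_mul_le_of_mem_carlesonBox {x η w : ℂ} {d : ℝ} (hη : ‖η‖ = 1)
    (hηx : ‖η - x‖ = 1 - ‖x‖) (hw : w ∈ carlesonBox x d) (hw1 : ‖w‖ ≤ 1) :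
    ‖1 - conj (((1 - d : ℝ) : ℂ) * η) * w‖ ≤ 4 * d := by
  obtain ⟨hwx, hwd⟩ := hw
  have hd : 0 ≤ d := (norm_nonneg _).trans hwx
  have hunit : conj η * η = 1 := by
    rw [mul_comm, Complex.mul_conj, Complex.normSq_eq_norm_sq, hη]
    simp
  have hsplit : 1 - conj (((1 - d : ℝ) : ℂ) * η) * w =
      conj η * ((η - x) - (w - x) + (d : ℂ) * w) := by
    rw [map_mul, Complex.conj_ofReal]
    push_cast
    linear_combination -hunit
  have hdw : ‖(d : ℂ) * w‖ ≤ d := by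
    rw [norm_mul, Complex.norm_real, Real.norm_of_nonneg hd]
    nlinarith
  have hsub : ‖w‖ ≤ ‖w - x‖ + ‖x‖ := by simpa using norm_add_le (w - x) x
  calc ‖1 - conj (((1 - d : ℝ) : ℂ) * η) * w‖
      ≤ ‖η - x‖ + ‖w - x‖ + ‖(d : ℂ) * w‖ := by
        rw [hsplit, norm_mul, RCLike.norm_conj, hη, one_mul]
        exact (norm_add_le _ _).trans (add_le_add_left (norm_sub_le _ _) _)
    _ ≤ 4 * d := by linarith

lemma one_le_rpow_mul_rpow_neg {x y s : ℝ} (hx : 0 < x) (hxy : x ≤ y) (hs : 0 ≤ s) :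
    1 ≤ y ^ s * x ^ (-s) := by
  rw [Real.rpow_neg hx.le, ← div_eq_mul_inv, one_le_div (by positivity)]
  exact Real.rpow_le_rpow hx.le hxy hs

lemma exists_diskMeasure_carlesonBox_le (hβ : -1 < β) :
    ∃ C : ℝ≥0, ∀ x : ℂ, ‖x‖ ≤ 1 → ∀ d : ℝ, 0 < d →
      diskMeasure β (carlesonBox x d) ≤ C * ENNReal.ofReal (d ^ (β + 2)) := by
  have := isFiniteMeasure_diskMeasure hβ
  obtain ⟨B, hB⟩ := exists_lintegral_rpow_kernel_le hβ (s := 2 * β + 4) le_rfl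
  refine ⟨measureUnivNNReal (diskMeasure β) + (4 ^ (2 * β + 4) : ℝ).toNNReal * B,
    fun x hx d hd => ?_⟩
  rw [ENNReal.coe_add, add_mul, coe_measureUnivNNReal]
  rcases le_or_gt 1 d with hd1 | hd1
  · refine le_add_of_le_of_nonneg
      ((measure_mono (subset_univ _)).trans (le_mul_of_one_le_right' ?_)) zero_le
    exact ENNReal.one_le_ofReal.2 (Real.one_le_rpow hd1 (by linarith))
  obtain ⟨η, hη, hηx⟩ := exists_norm_eq_one_norm_sub_eq hx
  set a : ℂ := ((1 - d : ℝ) : ℂ) * η with ha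
  have hnorm : ‖a‖ = 1 - d := by
    rw [ha, norm_mul, hη, Complex.norm_real, Real.norm_of_nonneg (by linarith), mul_one]
  have hlower : ∀ᵐ w ∂(diskMeasure β), (carlesonBox x d).indicator 1 w ≤
      ENNReal.ofReal ((4 * d) ^ (2 * β + 4)) *
        ENNReal.ofReal (‖1 - conj a * w‖ ^ (-(2 * β + 4))) := by
    filter_upwards [ae_diskMeasure_norm_lt_one] with w hw
    refine indicator_apply_le' (fun hwbox => ?_) fun _ => zero_le
    rw [← ENNReal.ofReal_mul (by positivity)]
    exact ENNReal.one_le_ofReal.2 (one_le_rpow_mul_rpow_neg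
      (norm_pos_iff.2 (one_sub_conj_mul_ne_zero (by linarith) hw.le))
      (norm_one_sub_conj_mul_le_of_mem_carlesonBox hη hηx hwbox hw.le) (by linarith))
  refine le_add_of_nonneg_of_le zero_le ?_
  calc diskMeasure β (carlesonBox x d)
      ≤ ENNReal.ofReal ((4 * d) ^ (2 * β + 4)) *
          (B * ENNReal.ofReal (d ^ (β + 2 - (2 * β + 4)))) := by
        rw [← lintegral_indicator_one (measurableSet_carlesonBox x d)]
        refine (lintegral_mono_ae hlower).trans ?_
        rw [lintegral_const_mul _ (by fun_prop)]
        gcongr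
        simpa [hnorm] using hB a (by linarith)
    _ = ((4 ^ (2 * β + 4) : ℝ).toNNReal * B : ℝ≥0) * ENNReal.ofReal (d ^ (β + 2)) := by
        have hexp : d ^ (β + 2) = d ^ (2 * β + 4) * d ^ (β + 2 - (2 * β + 4)) := by
          rw [← Real.rpow_add hd]
          congr 1
          ring
        rw [Real.mul_rpow (by norm_num) hd.le, hexp, ENNReal.ofReal_mul (by positivity),
          ENNReal.ofReal_mul (by positivity), ENNReal.coe_mul, ENNReal.ofReal]
        ring

end CarlesonBox

section Slicing

lemma pi_fin_two_apply {X : Type*} [MeasurableSpace X] (μ : Measure X) [SigmaFinite μ]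
    {S : Set (Fin 2 → X)} (hS : MeasurableSet S) {j k : Fin 2} (hjk : j ≠ k) (z₀ : Fin 2 → X) :
    Measure.pi (fun _ => μ) S =
      ∫⁻ y, μ {x | Function.update (Function.update z₀ k y) j x ∈ S} ∂μ := by
  have huniv : (Finset.univ : Finset (Fin 2)) = insert k {j} := by
    revert j k
    decide
  have hmeas : Measurable (S.indicator (1 : (Fin 2 → X) → ℝ≥0∞)) := measurable_one.indicator hS
  rw [← lintegral_indicator_one hS, lintegral_eq_lmarginal_univ z₀, huniv,
    lmarginal_insert _ hmeas (by simpa using hjk.symm)]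
  refine lintegral_congr fun y => ?_
  rw [lmarginal_singleton]
  exact lintegral_indicator_one (measurable_update _ hS)

/-- Slicing hypotheses on a subset of the bidisc which make its measure comparable to that of the
product of a Carleson box of size `d₁` in the variable `z_j`, whose position may depend on the
other variable `z_k`, and a Carleson box of size `d₂` in `z_k`. -/
structure IsSlicedBox (S : Set (Fin 2 → ℂ)) (j k : Fin 2) (d₁ d₂ : ℝ) : Prop where
  norm_sub_le_of_eq : ∀ z ∈ S, ∀ z' ∈ S, z k = z' k → ‖z j - z' j‖ ≤ d₁
  one_sub_norm_le : ∀ z ∈ S, 1 - ‖z j‖ ≤ d₁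
  norm_sub_le : ∀ z ∈ S, ∀ z' ∈ S, ‖z k - z' k‖ ≤ d₂
  one_sub_norm_le' : ∀ z ∈ S, 1 - ‖z k‖ ≤ d₂

lemma exists_Vbeta_le_of_isSlicedBox {β : ℝ} (hβ : -1 < β) :
    ∃ C : ℝ≥0, ∀ S ⊆ polydisc 2, MeasurableSet S → ∀ j k : Fin 2, j ≠ k →
      ∀ d₁ d₂ : ℝ, 0 < d₁ → 0 < d₂ → IsSlicedBox S j k d₁ d₂ →
        Vbeta 2 β S ≤ C * ENNReal.ofReal (d₁ ^ (β + 2) * d₂ ^ (β + 2)) := by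
  obtain ⟨C, hC⟩ := exists_diskMeasure_carlesonBox_le hβ
  refine ⟨C * C, fun S hS hSm j k hjk d₁ d₂ hd₁ hd₂ hbox => ?_⟩
  rcases S.eq_empty_or_nonempty with rfl | ⟨z₀, hz₀⟩
  · simp
  set pt : ℂ → ℂ → Fin 2 → ℂ := fun y x => Function.update (Function.update z₀ k y) j x
  have hpt_j (y x) : pt y x j = x := Function.update_self ..
  have hpt_k (y x) : pt y x k = y := by simp [pt, Function.update_of_ne hjk.symm]
  have hslice (y : ℂ) : diskMeasure β {x | pt y x ∈ S} ≤
      (carlesonBox (z₀ k) d₂).indicator (fun _ => C * ENNReal.ofReal (d₁ ^ (β + 2))) y := by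
    rcases ({x | pt y x ∈ S} : Set ℂ).eq_empty_or_nonempty with hempty | ⟨x₀, hx₀⟩
    · simp [hempty]
    have hy : y ∈ carlesonBox (z₀ k) d₂ := by
      have h₁ := hbox.norm_sub_le _ hx₀ _ hz₀
      have h₂ := hbox.one_sub_norm_le' _ hx₀
      rw [hpt_k] at h₁ h₂
      exact ⟨h₁, h₂⟩
    rw [indicator_of_mem hy]
    have hx₀' : ‖x₀‖ ≤ 1 := hpt_j y x₀ ▸ (hS hx₀ j).le
    refine (measure_mono fun x hx => ?_).trans (hC x₀ hx₀' d₁ hd₁)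
    have h₁ := hbox.norm_sub_le_of_eq _ hx _ hx₀ (by rw [hpt_k, hpt_k])
    have h₂ := hbox.one_sub_norm_le _ hx
    rw [hpt_j] at h₁ h₂
    exact ⟨by rwa [hpt_j] at h₁, h₂⟩
  calc Vbeta 2 β S = ∫⁻ y, diskMeasure β {x | pt y x ∈ S} ∂(diskMeasure β) := by
        rw [Vbeta_eq_pi 2 hβ, pi_fin_two_apply _ hSm hjk z₀]
    _ ≤ C * ENNReal.ofReal (d₁ ^ (β + 2)) * diskMeasure β (carlesonBox (z₀ k) d₂) := by
        refine (lintegral_mono hslice).trans_eq ?_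
        rw [lintegral_indicator_const (measurableSet_carlesonBox _ _)]
    _ ≤ C * ENNReal.ofReal (d₁ ^ (β + 2)) * (C * ENNReal.ofReal (d₂ ^ (β + 2))) := by
        gcongr
        exact hC _ (hS hz₀ k).le _ hd₂
    _ = (C * C : ℝ≥0) * ENNReal.ofReal (d₁ ^ (β + 2) * d₂ ^ (β + 2)) := by
        rw [ENNReal.ofReal_mul (by positivity), ENNReal.coe_mul]
        ring

end Slicing

section ConvexCalculus

variable {E F : Type*} [NormedAddCommGroup E] [NormedSpace ℝ E] [NormedAddCommGroup F]
  [NormedSpace ℝ F] {S : Set E} {f : E → F}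

lemma eventually_norm_sub_sub_fderivWithin_le (hS : Convex ℝ S) (hu : UniqueDiffOn ℝ S)
    (hf : ContDiffOn ℝ 1 f S) {x : E} (hx : x ∈ S) {ε : ℝ} (hε : 0 < ε) :
    ∀ᶠ U in (𝓝[S] x).smallSets, ∀ y ∈ U, ∀ z ∈ U,
      ‖f y - f z - fderivWithin ℝ f S x (y - z)‖ ≤ ε * ‖y - z‖ := by
  obtain ⟨r, hr, hcont⟩ := Metric.continuousWithinAt_iff.1
    (hf.continuousOn_fderivWithin hu le_rfl x hx) ε hε
  have hmem : S ∩ ball x r ∈ 𝓝[S] x := inter_mem_nhdsWithin S (ball_mem_nhds x hr)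
  filter_upwards [Filter.eventually_smallSets_subset.2 hmem] with U hU y hy z hz
  refine (hS.inter (convex_ball x r)).norm_image_sub_le_of_norm_hasFDerivWithin_le'
    (f' := fderivWithin ℝ f S) (fun w hw => ?_) (fun w hw => ?_) (hU hz) (hU hy)
  · exact (hf.differentiableOn one_ne_zero w hw.1).hasFDerivWithinAt.mono inter_subset_left
  · exact dist_eq_norm (fderivWithin ℝ f S w) _ ▸ (hcont hw.1 hw.2).le

lemma exists_norm_sub_sub_fderivWithin_le_sq (hc : IsCompact S) (hS : Convex ℝ S)
    (hu : UniqueDiffOn ℝ S) (hf : ContDiffOn ℝ 2 f S) :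
    ∃ K : ℝ, ∀ x ∈ S, ∀ y ∈ S, ‖f y - f x - fderivWithin ℝ f S x (y - x)‖ ≤ K * ‖y - x‖ ^ 2 := by
  have hf' : ContDiffOn ℝ 1 (fderivWithin ℝ f S) S := hf.fderivWithin hu (by norm_num)
  obtain ⟨K, hK⟩ := hc.exists_bound_of_continuousOn (hf'.continuousOn_fderivWithin hu le_rfl)
  refine ⟨K, fun x hx y hy => ?_⟩
  have hK₀ : 0 ≤ K := (norm_nonneg _).trans (hK x hx)
  rw [sq, ← mul_assoc]
  refine (hS.inter (convex_closedBall x ‖y - x‖)).norm_image_sub_le_of_norm_hasFDerivWithin_le'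
    (f' := fderivWithin ℝ f S) (fun w hw => ?_) (fun w hw => ?_) ⟨hx, by simp⟩
    ⟨hy, by simp [dist_eq_norm]⟩
  · exact (hf.differentiableOn two_ne_zero w hw.1).hasFDerivWithinAt.mono inter_subset_left
  · refine (hS.norm_image_sub_le_of_norm_fderivWithin_le (𝕜 := ℝ)
      (hf'.differentiableOn one_ne_zero) hK hx hw.1).trans ?_
    gcongr
    exact mem_closedBall_iff_norm.1 hw.2

end ConvexCalculus

section SchwarzPick

lemma mul_one_sub_norm_le_one_sub_norm {g : ℂ → ℂ} (hg : DifferentiableOn ℂ g (ball 0 1))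
    (hmaps : MapsTo g (ball 0 1) (ball 0 1)) {l : ℂ} (hl : ‖l‖ < 1) :
    (1 - ‖g 0‖) ^ 2 / 2 * (1 - ‖l‖) ≤ 1 - ‖g l‖ := by
  have hlt {w : ℂ} (hw : ‖w‖ < 1) : ‖g w‖ < 1 :=
    mem_ball_zero_iff.1 (hmaps (mem_ball_zero_iff.2 hw))
  have h₀ : ‖g 0‖ < 1 := hlt (by simp)
  have hschwarz : ‖mobius (g 0) (g l)‖ ≤ ‖l‖ := by
    refine Complex.norm_le_norm_of_mapsTo_ball (f := mobius (g 0) ∘ g) (R := 1)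
      (fun w hw => ?_) (fun w hw => ?_) (by simp [mobius]) hl
    · exact (hasDerivAt_mobius h₀ (hlt (mem_ball_zero_iff.1 hw))).differentiableAt
        |>.comp_differentiableWithinAt w (hg w hw)
    · exact ball_subset_closedBall ((bijOn_mobius h₀).mapsTo (hmaps hw))
  have hden : 1 - ‖g 0‖ ≤ ‖1 - conj (g 0) * g l‖ := by
    have h := norm_sub_norm_le (1 : ℂ) (conj (g 0) * g l)
    rw [norm_one, norm_mul, RCLike.norm_conj] at h
    nlinarith [norm_nonneg (g 0), hlt hl]
  have hden_pos : 0 < 1 - ‖g 0‖ := sub_pos.2 h₀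
  have hpick : (1 - ‖l‖ ^ 2) * ‖1 - conj (g 0) * g l‖ ^ 2 ≤
      (1 - ‖g 0‖ ^ 2) * (1 - ‖g l‖ ^ 2) := by
    rw [← le_div_iff₀ (pow_pos (hden_pos.trans_le hden) 2),
      ← one_sub_norm_mobius_sq h₀ (hlt hl).le]
    gcongr
  have hgl := one_sub_norm_sq_pos (hlt hl)
  have hmain : (1 - ‖g 0‖) ^ 2 * (1 - ‖l‖) ≤ 2 * (1 - ‖g l‖) :=
    calc (1 - ‖g 0‖) ^ 2 * (1 - ‖l‖) ≤ ‖1 - conj (g 0) * g l‖ ^ 2 * (1 - ‖l‖ ^ 2) := by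
          gcongr
          nlinarith [norm_nonneg l]
      _ ≤ (1 - ‖g 0‖ ^ 2) * (1 - ‖g l‖ ^ 2) := by linarith
      _ ≤ 1 - ‖g l‖ ^ 2 := mul_le_of_le_one_left hgl.le (by nlinarith [norm_nonneg (g 0)])
      _ ≤ 2 * (1 - ‖g l‖) := by nlinarith [norm_nonneg (g l)]
  linarith

end SchwarzPick

section Matrices

variable {n : ℕ} {A : Matrix (Fin n) (Fin n) ℂ}

lemma exists_perm_forall_ne_zero_of_det_ne_zero (hA : A.det ≠ 0) :
    ∃ σ : Equiv.Perm (Fin n), ∀ i, A i (σ i) ≠ 0 := by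
  rw [← Matrix.det_transpose, Matrix.det_apply'] at hA
  obtain ⟨σ, -, hσ⟩ := Finset.exists_ne_zero_of_sum_ne_zero hA
  exact ⟨σ, fun i => Finset.prod_ne_zero_iff.1 (right_ne_zero_of_mul hσ) i (Finset.mem_univ i)⟩

lemma exists_le_norm_mulVec_of_det_ne_zero (hA : A.det ≠ 0) :
    ∃ c > 0, ∀ v, c * ‖v‖ ≤ ‖A.mulVec v‖ := by
  have hker : LinearMap.ker A.mulVecLin = ⊥ := LinearMap.ker_eq_bot.2
    (Matrix.mulVec_injective_of_isUnit ((Matrix.isUnit_iff_isUnit_det A).2 hA.isUnit))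
  obtain ⟨K, hK, hanti⟩ := A.mulVecLin.exists_antilipschitzWith hker
  refine ⟨(K : ℝ)⁻¹, by positivity, fun v => ?_⟩
  rw [inv_mul_le_iff₀ (by positivity)]
  simpa using hanti.le_mul_norm_sub v 0

end Matrices

section BoundaryDerivative

variable {n : ℕ} {Φ : (Fin n → ℂ) → Fin n → ℂ} {ζ : Fin n → ℂ} {i j k : Fin n}

/-- The complex Jacobian matrix of `Φ` at a point of the closed polydisc. -/
def jacMatrix (n : ℕ) (Φ : (Fin n → ℂ) → Fin n → ℂ) (ζ : Fin n → ℂ) :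
    Matrix (Fin n) (Fin n) ℂ :=
  Matrix.of fun i j => jacEntry n Φ ζ i j

/-- Holomorphic self-maps of the polydisc whose real derivative extends continuously to the closed
polydisc. -/
structure IsC1SelfMap (n : ℕ) (Φ : (Fin n → ℂ) → Fin n → ℂ) : Prop where
  differentiableOn : DifferentiableOn ℂ Φ (polydisc n)
  contDiffOn : ContDiffOn ℝ 1 Φ (closedPolydisc n)
  mapsTo : MapsTo Φ (polydisc n) (polydisc n)

lemma update_mem_closedPolydisc (hζ : ζ ∈ closedPolydisc n) {w : ℂ} (hw : ‖w‖ ≤ 1) :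
    Function.update ζ k w ∈ closedPolydisc n := fun l => by
  rcases eq_or_ne l k with rfl | hl
  · simpa using hw
  · simpa [hl] using hζ l

lemma update_mem_polydisc {z : Fin n → ℂ} (hz : z ∈ polydisc n) {w : ℂ} (hw : ‖w‖ < 1) :
    Function.update z k w ∈ polydisc n := fun l => by
  rcases eq_or_ne l k with rfl | hl
  · simpa using hw
  · simpa [hl] using hz l

lemma smul_mem_polydisc (hζ : ζ ∈ closedPolydisc n) {w : ℂ} (hw : ‖w‖ < 1) :
    w • ζ ∈ polydisc n := fun l => by
  rw [Pi.smul_apply, norm_smul]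
  exact (mul_le_of_le_one_right (norm_nonneg w) (hζ l)).trans_lt hw

lemma continuousOn_jacEntry (hΦ : ContDiffOn ℝ 1 Φ (closedPolydisc n)) :
    ContinuousOn (fun ζ => jacEntry n Φ ζ i j) (closedPolydisc n) :=
  continuousOn_pi.1 ((hΦ.continuousOn_fderivWithin uniqueDiffOn_closedPolydisc le_rfl).clm_apply
    continuousOn_const) i

namespace IsC1SelfMap

lemma hasFDerivWithinAt (hΦ : IsC1SelfMap n Φ) (hζ : ζ ∈ closedPolydisc n) :
    HasFDerivWithinAt Φ (fderivWithin ℝ Φ (closedPolydisc n) ζ) (closedPolydisc n) ζ :=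
  (hΦ.contDiffOn.differentiableOn one_ne_zero ζ hζ).hasFDerivWithinAt

lemma mapsTo_closedPolydisc (hΦ : IsC1SelfMap n Φ) :
    MapsTo Φ (closedPolydisc n) (closedPolydisc n) := by
  simpa only [closure_polydisc] using hΦ.mapsTo.closure_of_continuousOn
    (closure_polydisc (n := n) ▸ hΦ.contDiffOn.continuousOn)

lemma fderivWithin_smul (hΦ : IsC1SelfMap n Φ) (hζ : ζ ∈ closedPolydisc n) (c : ℂ)
    (h : Fin n → ℂ) : fderivWithin ℝ Φ (closedPolydisc n) ζ (c • h) =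
      c • fderivWithin ℝ Φ (closedPolydisc n) ζ h := by
  have hcont := hΦ.contDiffOn.continuousOn_fderivWithin uniqueDiffOn_closedPolydisc le_rfl
  refine EqOn.of_subset_closure (s := polydisc n) (fun z hz => ?_)
    (hcont.clm_apply continuousOn_const) ((hcont.clm_apply continuousOn_const).const_smul c)
    polydisc_subset_closedPolydisc closure_polydisc.ge hζ
  have hholo : HasFDerivAt Φ (fderiv ℂ Φ z) z :=
    (hΦ.differentiableOn.differentiableAt (isOpen_polydisc.mem_nhds hz)).hasFDerivAt
  simp [(hholo.restrictScalars ℝ).hasFDerivWithinAt.fderivWithin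
    (uniqueDiffOn_closedPolydisc z (polydisc_subset_closedPolydisc hz))]

lemma fderivWithin_eq_mulVec (hΦ : IsC1SelfMap n Φ) (hζ : ζ ∈ closedPolydisc n) (h : Fin n → ℂ) :
    fderivWithin ℝ Φ (closedPolydisc n) ζ h = (jacMatrix n Φ ζ).mulVec h := by
  have hsum : h = ∑ j, h j • Pi.single j (1 : ℂ) := by
    ext l
    simp [Finset.sum_apply, Pi.single_apply]
  conv_lhs => rw [hsum, map_sum]
  ext i
  simp only [hΦ.fderivWithin_smul hζ, Finset.sum_apply, Pi.smul_apply, smul_eq_mul,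
    Matrix.mulVec, dotProduct, jacMatrix, Matrix.of_apply, jacEntry, mul_comm]

lemma fderivWithin_single (hΦ : IsC1SelfMap n Φ) (hζ : ζ ∈ closedPolydisc n) (w : ℂ) :
    fderivWithin ℝ Φ (closedPolydisc n) ζ (Pi.single j w) i = jacEntry n Φ ζ i j * w := by
  rw [hΦ.fderivWithin_eq_mulVec hζ, Matrix.mulVec_single]
  simp [jacMatrix, mul_comm]

lemma hasDerivAt_slice (hΦ : IsC1SelfMap n Φ) (hζ : ζ ∈ closedPolydisc n) {w : ℂ} (hw : ‖w‖ < 1) :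
    HasDerivAt (fun w => Φ (Function.update ζ k w) i)
      (jacEntry n Φ (Function.update ζ k w) i k) w := by
  have hmem := update_mem_closedPolydisc (k := k) hζ hw.le
  have hw' : ball (0 : ℂ) 1 ∈ 𝓝 w := isOpen_ball.mem_nhds (mem_ball_zero_iff.2 hw)
  have hcomp := ((hΦ.hasFDerivWithinAt hmem).comp w
    (hasFDerivAt_update (𝕜 := ℝ) ζ w).hasFDerivWithinAt fun x hx =>
      update_mem_closedPolydisc hζ (mem_ball_zero_iff.1 hx).le).hasFDerivAt hw'
  have hsingle (x : ℂ) : ContinuousLinearMap.pi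
      (Pi.single k (ContinuousLinearMap.id ℝ ℂ)) x = (Pi.single k x : Fin n → ℂ) := by
    ext l
    rcases eq_or_ne l k with rfl | hl <;> simp [*]
  refine hasFDerivAt_of_restrictScalars ℝ (hasFDerivAt_pi'.1 hcomp i)
    (ContinuousLinearMap.ext fun x => ?_)
  simp only [ContinuousLinearMap.coe_restrictScalars', ContinuousLinearMap.toSpanSingleton_apply,
    ContinuousLinearMap.comp_apply, ContinuousLinearMap.proj_apply, hsingle,
    hΦ.fderivWithin_single hmem, smul_eq_mul, mul_comm]

lemma slice_eq_of_norm_eq_one (hΦ : IsC1SelfMap n Φ) (hζ : ζ ∈ closedPolydisc n)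
    (hi : ‖Φ ζ i‖ = 1) (hk : ‖ζ k‖ < 1) {w : ℂ} (hw : ‖w‖ ≤ 1) :
    Φ (Function.update ζ k w) i = Φ ζ i := by
  have hmem {w : ℂ} (hw : w ∈ closedBall (0 : ℂ) 1) : Function.update ζ k w ∈ closedPolydisc n :=
    update_mem_closedPolydisc hζ (mem_closedBall_zero_iff.1 hw)
  have hopen : EqOn (fun w => Φ (Function.update ζ k w) i) (fun _ => Φ ζ i) (ball 0 1) := by
    intro w hw
    have h := Complex.eqOn_of_isPreconnected_of_isMaxOn_norm (convex_ball (0 : ℂ) 1).isPreconnected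
      isOpen_ball (fun w hw => (hΦ.hasDerivAt_slice (i := i) (k := k) hζ
        (mem_ball_zero_iff.1 hw)).differentiableAt.differentiableWithinAt)
      (mem_ball_zero_iff.2 hk) (fun w hw => ?_) hw
    · simpa using h
    · simpa [hi] using hΦ.mapsTo_closedPolydisc (hmem (ball_subset_closedBall hw)) i
  have hcont : ContinuousOn (fun w => Φ (Function.update ζ k w) i) (closedBall 0 1) :=
    continuousOn_pi.1 (hΦ.contDiffOn.continuousOn.comp (by fun_prop) fun w hw => hmem hw) i
  exact hopen.of_subset_closure hcont continuousOn_const ball_subset_closedBall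
    (closure_ball (0 : ℂ) one_ne_zero).ge (mem_closedBall_zero_iff.2 hw)

lemma jacEntry_update_eq_zero (hΦ : IsC1SelfMap n Φ) (hζ : ζ ∈ closedPolydisc n)
    (hi : ‖Φ ζ i‖ = 1) (hk : ‖ζ k‖ < 1) {w : ℂ} (hw : ‖w‖ ≤ 1) :
    jacEntry n Φ (Function.update ζ k w) i k = 0 := by
  have hcont : ContinuousOn (fun w => jacEntry n Φ (Function.update ζ k w) i k)
      (closedBall 0 1) :=
    (continuousOn_jacEntry hΦ.contDiffOn).comp (by fun_prop) fun w hw =>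
      update_mem_closedPolydisc hζ (mem_closedBall_zero_iff.1 hw)
  refine EqOn.of_subset_closure (s := ball 0 1) (fun w hw => ?_) hcont continuousOn_const
    ball_subset_closedBall (closure_ball (0 : ℂ) one_ne_zero).ge (mem_closedBall_zero_iff.2 hw)
  refine (hΦ.hasDerivAt_slice hζ (mem_ball_zero_iff.1 hw)).unique
    ((hasDerivAt_const w (Φ ζ i)).congr_of_eventuallyEq ?_)
  filter_upwards [isOpen_ball.mem_nhds hw] with x hx
  exact hΦ.slice_eq_of_norm_eq_one hζ hi hk (mem_ball_zero_iff.1 hx).le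

lemma mem_torus_of_map_mem_torus (hΦ : IsC1SelfMap n Φ)
    (hdet : ∀ ζ ∈ torus n, Φ ζ ∈ torus n → (jacMatrix n Φ ζ).det ≠ 0)
    (hζ : ζ ∈ closedPolydisc n) (hΦζ : Φ ζ ∈ torus n) : ζ ∈ torus n := by
  induction hm : (Finset.univ.filter fun k => ‖ζ k‖ < 1).card using Nat.strong_induction_on
    generalizing ζ with
  | _ m ih =>
    refine fun k => (hζ k).eq_of_not_lt fun hk => ?_
    have hΦζ' : Φ (Function.update ζ k 1) = Φ ζ := funext fun i =>
      hΦ.slice_eq_of_norm_eq_one hζ (hΦζ i) hk norm_one.le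
    have hcard : (Finset.univ.filter fun l => ‖Function.update ζ k 1 l‖ < 1).card < m := by
      rw [← hm]
      refine Finset.card_lt_card (Finset.ssubset_iff_of_subset (fun l => ?_) |>.2 ⟨k, ?_, ?_⟩)
      · rcases eq_or_ne l k with rfl | hl <;> simp [*]
      · simpa using hk
      · simp
    have htorus := ih _ hcard (update_mem_closedPolydisc hζ norm_one.le) (hΦζ' ▸ hΦζ) rfl
    exact hdet _ htorus (hΦζ' ▸ hΦζ) (Matrix.det_eq_zero_of_column_eq_zero k fun i =>
      hΦ.jacEntry_update_eq_zero hζ (hΦζ i) hk norm_one.le)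

lemma exists_jacEntry_ne_zero (hΦ : IsC1SelfMap n Φ) (hζ : ζ ∈ closedPolydisc n)
    (hi : ‖Φ ζ i‖ = 1) : ∃ j, jacEntry n Φ ζ i j ≠ 0 := by
  by_contra! hJ
  have hmem {w : ℂ} (hw : w ∈ ball (0 : ℂ) 1) : w • ζ ∈ polydisc n :=
    smul_mem_polydisc hζ (mem_ball_zero_iff.1 hw)
  have hg : DifferentiableOn ℂ (fun w : ℂ => Φ (w • ζ) i) (ball 0 1) :=
    differentiableOn_pi.1 (hΦ.differentiableOn.comp (by fun_prop) fun w hw => hmem hw) i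
  have hmaps : MapsTo (fun w : ℂ => Φ (w • ζ) i) (ball 0 1) (ball 0 1) := fun w hw =>
    mem_ball_zero_iff.2 (hΦ.mapsTo (hmem hw) i)
  have hray : HasDerivWithinAt (fun r : ℝ => r • ζ) ζ (Ico 0 1) 1 := by
    simpa using ((hasDerivAt_id (1 : ℝ)).smul_const ζ).hasDerivWithinAt
  have hnorm {r : ℝ} (hr : r ∈ Ico (0 : ℝ) 1) : ‖(r : ℂ)‖ = r := by simp [abs_of_nonneg hr.1]
  have hsmul (r : ℝ) : r • ζ = (r : ℂ) • ζ := (Complex.coe_smul r ζ).symm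
  have hderiv : HasDerivWithinAt (fun r : ℝ => Φ (r • ζ) i) 0 (Ico 0 1) 1 := by
    have hD := hΦ.hasFDerivWithinAt hζ
    rw [← one_smul ℝ ζ] at hD
    refine (hasDerivWithinAt_pi.1 (hD.comp_hasDerivWithinAt 1 hray fun r hr => ?_) i).congr_deriv ?_
    · change r • ζ ∈ closedPolydisc n
      rw [hsmul]
      exact polydisc_subset_closedPolydisc (smul_mem_polydisc hζ ((hnorm hr).trans_lt hr.2))
    · simp [hΦ.fderivWithin_eq_mulVec hζ, Matrix.mulVec, dotProduct, jacMatrix, hJ]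
  have hκ : 0 < (1 - ‖Φ ((0 : ℂ) • ζ) i‖) ^ 2 / 2 := by
    have := hΦ.mapsTo (hmem (w := 0) (by simp)) i
    have : 0 < 1 - ‖Φ ((0 : ℂ) • ζ) i‖ := by linarith
    positivity
  have : (𝓝[Ico (0 : ℝ) 1] 1).NeBot := mem_closure_iff_nhdsWithin_neBot.1 (by
    rw [closure_Ico zero_ne_one]
    exact right_mem_Icc.2 zero_le_one)
  obtain ⟨r, hsmall, hr⟩ := (((hasDerivWithinAt_iff_isLittleO.1 hderiv).def (half_pos hκ)).and
    self_mem_nhdsWithin).exists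
  have hpick := mul_one_sub_norm_le_one_sub_norm hg hmaps (l := r) ((hnorm hr).trans_lt hr.2)
  have hdist := norm_sub_norm_le (Φ ζ i) (Φ (r • ζ) i)
  rw [hnorm hr, ← hsmul] at hpick
  rw [hi, norm_sub_rev] at hdist
  simp only [one_smul, smul_zero, sub_zero, Real.norm_eq_abs, abs_of_neg (sub_neg.2 hr.2)] at hsmall
  nlinarith [mul_pos hκ (sub_pos.2 hr.2)]

lemma eventually_norm_sub_sub_mulVec_le (hΦ : IsC1SelfMap n Φ) (hζ : ζ ∈ closedPolydisc n)
    {ε : ℝ} (hε : 0 < ε) :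
    ∀ᶠ U in (𝓝[polydisc n] ζ).smallSets, ∀ z ∈ U, ∀ z' ∈ U,
      ‖Φ z - Φ z' - (jacMatrix n Φ ζ).mulVec (z - z')‖ ≤ ε * ‖z - z'‖ := by
  simp only [← hΦ.fderivWithin_eq_mulVec hζ]
  exact (eventually_norm_sub_sub_fderivWithin_le convex_closedPolydisc
    uniqueDiffOn_closedPolydisc hΦ.contDiffOn hζ hε).filter_mono
      (Filter.monotone_smallSets (nhdsWithin_mono ζ polydisc_subset_closedPolydisc))

lemma eventually_norm_sub_ge_of_det_ne_zero (hΦ : IsC1SelfMap n Φ) (hζ : ζ ∈ closedPolydisc n)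
    (hdet : (jacMatrix n Φ ζ).det ≠ 0) :
    ∃ c > 0, ∀ᶠ U in (𝓝[polydisc n] ζ).smallSets, ∀ z ∈ U, ∀ z' ∈ U,
      c * ‖z - z'‖ ≤ ‖Φ z - Φ z'‖ := by
  obtain ⟨c, hc, hJ⟩ := exists_le_norm_mulVec_of_det_ne_zero hdet
  refine ⟨c / 2, half_pos hc, ?_⟩
  filter_upwards [hΦ.eventually_norm_sub_sub_mulVec_le hζ (half_pos hc)]
    with U hU z hz z' hz'
  have hest := hU z hz z' hz'
  have htri := norm_sub_norm_le ((jacMatrix n Φ ζ).mulVec (z - z')) (Φ z - Φ z')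
  rw [norm_sub_rev ((jacMatrix n Φ ζ).mulVec (z - z'))] at htri
  linarith [hJ (z - z')]

lemma eventually_norm_sub_ge (hΦ : IsC1SelfMap n Φ) (hζ : ζ ∈ closedPolydisc n)
    (hJ : jacEntry n Φ ζ i j ≠ 0) :
    ∃ c > 0, ∀ᶠ U in (𝓝[polydisc n] ζ).smallSets, ∀ z ∈ U, ∀ z' ∈ U,
      (∀ l ≠ j, z l = z' l) → c * ‖z j - z' j‖ ≤ ‖Φ z i - Φ z' i‖ := by
  refine ⟨‖jacEntry n Φ ζ i j‖ / 2, half_pos (norm_pos_iff.2 hJ), ?_⟩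
  filter_upwards [hΦ.eventually_norm_sub_sub_mulVec_le hζ (half_pos (norm_pos_iff.2 hJ))]
    with U hU z hz z' hz' hl
  have hsingle : z - z' = Pi.single j (z j - z' j) := by
    ext l
    rcases eq_or_ne l j with rfl | hlj
    · simp
    · simp [hlj, hl l hlj]
  have hest := (norm_le_pi_norm _ i).trans (hU z hz z' hz')
  rw [← hΦ.fderivWithin_eq_mulVec hζ, hsingle, Pi.norm_single, Pi.sub_apply, Pi.sub_apply,
    hΦ.fderivWithin_single hζ] at hest
  have htri := norm_sub_norm_le (jacEntry n Φ ζ i j * (z j - z' j)) (Φ z i - Φ z' i)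
  rw [norm_sub_rev (jacEntry n Φ ζ i j * (z j - z' j)), norm_mul] at htri
  linarith

lemma eventually_one_sub_norm_ge (hΦ : IsC1SelfMap n Φ) (hζ : ζ ∈ closedPolydisc n)
    (hJ : jacEntry n Φ ζ i j ≠ 0) :
    ∃ c > 0, ∀ᶠ z in 𝓝[polydisc n] ζ, c * (1 - ‖z j‖) ≤ 1 - ‖Φ z i‖ := by
  have hζ₀ : Function.update ζ j 0 ∈ closedPolydisc n :=
    update_mem_closedPolydisc hζ (by simp)
  have hlt : ‖Φ (Function.update ζ j 0) i‖ < 1 := by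
    refine (hΦ.mapsTo_closedPolydisc hζ₀ i).lt_of_ne fun h => hJ ?_
    simpa using hΦ.jacEntry_update_eq_zero (k := j) hζ₀ h (by simp) (hζ j)
  obtain ⟨q, hq, hq₁⟩ := exists_between hlt
  refine ⟨(1 - q) ^ 2 / 2, by have := sub_pos.2 hq₁; positivity, ?_⟩
  have hcont : ContinuousWithinAt (fun z => ‖Φ (Function.update z j 0) i‖) (polydisc n) ζ := by
    have hcomp := hΦ.contDiffOn.continuousOn.comp (s := closedPolydisc n)
      (f := fun z => Function.update z j 0) (by fun_prop) fun z hz =>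
        update_mem_closedPolydisc hz (by simp)
    exact ((continuousOn_pi.1 hcomp i).norm ζ hζ).mono polydisc_subset_closedPolydisc
  filter_upwards [hcont.eventually (gt_mem_nhds hq), self_mem_nhdsWithin] with z hz hzmem
  have hslice : MapsTo (Function.update z j) (ball 0 1) (polydisc n) := fun w hw =>
    update_mem_polydisc hzmem (mem_ball_zero_iff.1 hw)
  have hpick := mul_one_sub_norm_le_one_sub_norm (g := fun w => Φ (Function.update z j w) i)
    (differentiableOn_pi.1 (hΦ.differentiableOn.comp
      (fun w _ => (hasFDerivAt_update z w).differentiableAt.differentiableWithinAt) hslice) i)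
    (fun w hw => mem_ball_zero_iff.2 (hΦ.mapsTo (hslice hw) i)) (hzmem j)
  rw [Function.update_eq_self] at hpick
  refine le_trans ?_ hpick
  have := (hzmem j).le
  gcongr

end IsC1SelfMap

end BoundaryDerivative

section CarlesonCondition

variable {n : ℕ} {Φ : (Fin n → ℂ) → Fin n → ℂ} {u z z' ζ : Fin n → ℂ} {i j : Fin n} {β : ℝ}

/-- The preimage under `Φ` of the polydisc with centre `u` and radii `(1 - |u_i|) / 2`. -/
def whitneyPreimage (n : ℕ) (Φ : (Fin n → ℂ) → Fin n → ℂ) (u : Fin n → ℂ) : Set (Fin n → ℂ) :=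
  {z ∈ polydisc n | ∀ i, ‖Φ z i - u i‖ ≤ (1 - ‖u i‖) / 2}

/-- The Carleson condition for the pullback measure of the part of `V_β` carried by `t`, tested on
the polydiscs with centre `u` and radii `(1 - |u_i|) / 2`. -/
def IsCarlesonOn (n : ℕ) (β : ℝ) (Φ : (Fin n → ℂ) → Fin n → ℂ) (t : Set (Fin n → ℂ)) : Prop :=
  ∃ C : ℝ≥0, ∀ u ∈ polydisc n,
    Vbeta n β (whitneyPreimage n Φ u ∩ t) ≤ C * ENNReal.ofReal (∏ i, (1 - ‖u i‖) ^ (β + 2))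

lemma measurableSet_mem_whitneyPreimage (hΦ : ContinuousOn Φ (polydisc n)) :
    MeasurableSet {p : (Fin n → ℂ) × (Fin n → ℂ) | p.1 ∈ whitneyPreimage n Φ p.2} := by
  classical
  have hmeas : Measurable ((polydisc n).piecewise Φ fun _ => 0) :=
    hΦ.measurable_piecewise continuousOn_const measurableSet_polydisc
  have hclosed : MeasurableSet {p : (Fin n → ℂ) × (Fin n → ℂ) |
      ∀ i, ‖p.1 i - p.2 i‖ ≤ (1 - ‖p.2 i‖) / 2} := by
    simp only [ofPred_forall]
    exact (isClosed_iInter fun i => isClosed_le (by fun_prop) (by fun_prop)).measurableSet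
  convert (measurable_fst measurableSet_polydisc).inter
    (((hmeas.comp measurable_fst).prodMk measurable_snd) hclosed) using 1
  ext ⟨z, u⟩
  refine and_congr_right fun hz => ?_
  simp [piecewise_eq_of_mem _ _ _ (show z ∈ polydisc n from hz)]

lemma measurableSet_whitneyPreimage (hΦ : ContinuousOn Φ (polydisc n)) (u : Fin n → ℂ) :
    MeasurableSet (whitneyPreimage n Φ u) :=
  measurable_prodMk_right (measurableSet_mem_whitneyPreimage hΦ)

lemma one_sub_norm_apply_le_of_mem_whitneyPreimage (hz : z ∈ whitneyPreimage n Φ u) (i : Fin n) :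
    1 - ‖Φ z i‖ ≤ 3 / 2 * (1 - ‖u i‖) := by
  have := norm_sub_norm_le (u i) (Φ z i)
  rw [norm_sub_rev] at this
  linarith [hz.2 i]

lemma norm_apply_sub_apply_le_of_mem_whitneyPreimage (hz : z ∈ whitneyPreimage n Φ u)
    (hz' : z' ∈ whitneyPreimage n Φ u) (i : Fin n) : ‖Φ z i - Φ z' i‖ ≤ 1 - ‖u i‖ := by
  have := norm_sub_le (Φ z i - u i) (Φ z' i - u i)
  rw [sub_sub_sub_cancel_right] at this
  linarith [hz.2 i, hz'.2 i]

lemma IsCarlesonOn.mono {s t : Set (Fin n → ℂ)} (hst : s ⊆ t) (ht : IsCarlesonOn n β Φ t) :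
    IsCarlesonOn n β Φ s :=
  ht.imp fun _ hC u hu => (measure_mono (inter_subset_inter_right _ hst)).trans (hC u hu)

lemma isCarlesonOn_empty : IsCarlesonOn n β Φ ∅ := ⟨0, by simp⟩

lemma IsCarlesonOn.union {s t : Set (Fin n → ℂ)} (hs : IsCarlesonOn n β Φ s)
    (ht : IsCarlesonOn n β Φ t) : IsCarlesonOn n β Φ (s ∪ t) := by
  obtain ⟨C, hC⟩ := hs
  obtain ⟨D, hD⟩ := ht
  refine ⟨C + D, fun u hu => ?_⟩
  rw [inter_union_distrib_left, ENNReal.coe_add, add_mul]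
  exact (measure_union_le _ _).trans (add_le_add (hC u hu) (hD u hu))

lemma isCarlesonOn_of_forall_exists_nhds
    (h : ∀ ζ ∈ closedPolydisc n, ∃ V ∈ 𝓝 ζ, IsCarlesonOn n β Φ V) :
    IsCarlesonOn n β Φ (closedPolydisc n) :=
  isCompact_closedPolydisc.induction_on isCarlesonOn_empty (fun _ _ => IsCarlesonOn.mono)
    (fun _ _ => IsCarlesonOn.union) fun ζ hζ =>
      (h ζ hζ).imp fun _ hV => hV.imp_left mem_nhdsWithin_of_mem_nhds

/-- Near `ζ`, the preimages of the test polydiscs are `O(1 - |u_i|)`-close to the circle in the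
variable `z_j`, and `O(1 - |u_i|)`-thin in the direction of that variable. -/
def ControlsSlice (n : ℕ) (Φ : (Fin n → ℂ) → Fin n → ℂ) (ζ : Fin n → ℂ) (i j : Fin n) : Prop :=
  ∀ᶠ K : ℝ in Filter.atTop, ∀ᶠ U in (𝓝[polydisc n] ζ).smallSets, ∀ u,
    ∀ z ∈ whitneyPreimage n Φ u ∩ U, 1 - ‖z j‖ ≤ K * (1 - ‖u i‖) ∧
      ∀ z' ∈ whitneyPreimage n Φ u ∩ U, (∀ l ≠ j, z l = z' l) → ‖z j - z' j‖ ≤ K * (1 - ‖u i‖)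

lemma one_sub_norm_le_two (z : ℂ) : 1 - ‖z‖ ≤ 2 := by linarith [norm_nonneg z]

lemma norm_apply_sub_apply_le_two (hz : z ∈ polydisc n) (hz' : z' ∈ polydisc n) (j : Fin n) :
    ‖z j - z' j‖ ≤ 2 := by
  linarith [norm_sub_le (z j) (z' j), hz j, hz' j]

namespace IsC1SelfMap

lemma eventually_two_le_mul_one_sub_norm (hΦ : IsC1SelfMap n Φ) (hζ : ζ ∈ closedPolydisc n)
    (hi : ‖Φ ζ i‖ < 1) :
    ∀ᶠ K : ℝ in Filter.atTop, ∀ᶠ U in (𝓝[polydisc n] ζ).smallSets, ∀ u,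
      ∀ z ∈ whitneyPreimage n Φ u ∩ U, 2 ≤ K * (1 - ‖u i‖) := by
  obtain ⟨q, hq, hq₁⟩ := exists_between hi
  have hcont : ContinuousWithinAt (fun z => ‖Φ z i‖) (polydisc n) ζ :=
    ((continuousOn_pi.1 hΦ.contDiffOn.continuousOn i).norm ζ hζ).mono polydisc_subset_closedPolydisc
  have hq' : 0 < 1 - q := sub_pos.2 hq₁
  filter_upwards [Filter.eventually_ge_atTop (3 / (1 - q))] with K hK
  have hK₀ : 0 ≤ K := (by positivity : 0 ≤ 3 / (1 - q)).trans hK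
  filter_upwards [Filter.eventually_smallSets_forall.2 (hcont.eventually (gt_mem_nhds hq))]
    with U hU u z hz
  have hlow : 2 / 3 * (1 - q) ≤ 1 - ‖u i‖ := by
    linarith [one_sub_norm_apply_le_of_mem_whitneyPreimage hz.1 i, hU z hz.2]
  calc (2 : ℝ) = 3 / (1 - q) * (2 / 3 * (1 - q)) := by field_simp
    _ ≤ K * (1 - ‖u i‖) := by gcongr

lemma controlsSlice_of_norm_lt_one (hΦ : IsC1SelfMap n Φ) (hζ : ζ ∈ closedPolydisc n)
    (hi : ‖Φ ζ i‖ < 1) (j : Fin n) : ControlsSlice n Φ ζ i j := by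
  filter_upwards [hΦ.eventually_two_le_mul_one_sub_norm hζ hi] with K hK
  filter_upwards [hK] with U hU u z hz
  exact ⟨(one_sub_norm_le_two _).trans (hU u z hz), fun z' hz' _ =>
    (norm_apply_sub_apply_le_two hz.1.1 hz'.1.1 j).trans (hU u z hz)⟩

lemma controlsSlice_of_jacEntry_ne_zero (hΦ : IsC1SelfMap n Φ) (hζ : ζ ∈ closedPolydisc n)
    (hJ : jacEntry n Φ ζ i j ≠ 0) : ControlsSlice n Φ ζ i j := by
  obtain ⟨c₁, hc₁, h₁⟩ := hΦ.eventually_norm_sub_ge hζ hJ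
  obtain ⟨c₂, hc₂, h₂⟩ := hΦ.eventually_one_sub_norm_ge hζ hJ
  filter_upwards [Filter.eventually_ge_atTop (1 / c₁), Filter.eventually_ge_atTop (3 / 2 / c₂)]
    with K hK₁ hK₂
  rw [div_le_iff₀ (by positivity)] at hK₁ hK₂
  filter_upwards [h₁, Filter.eventually_smallSets_forall.2 h₂] with U hU₁ hU₂ u z hz
  have hnear := (hU₂ z hz.2).trans (one_sub_norm_apply_le_of_mem_whitneyPreimage hz.1 i)
  refine ⟨?_, fun z' hz' hl => ?_⟩
  · have := (hz.1.1 j).le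
    have hj : 0 ≤ 1 - ‖z j‖ := by linarith
    have hu : 0 ≤ 1 - ‖u i‖ := by nlinarith [mul_nonneg hc₂.le hj]
    refine le_of_mul_le_mul_left ?_ hc₂
    nlinarith [mul_le_mul_of_nonneg_right hK₂ hu]
  · have hthin := (hU₁ z hz.2 z' hz'.2 hl).trans
      (norm_apply_sub_apply_le_of_mem_whitneyPreimage hz.1 hz'.1 i)
    have hu : 0 ≤ 1 - ‖u i‖ := (by positivity : 0 ≤ c₁ * ‖z j - z' j‖).trans hthin
    refine le_of_mul_le_mul_left ?_ hc₁
    nlinarith [mul_le_mul_of_nonneg_right hK₁ hu]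

lemma exists_controlsSlice (hΦ : IsC1SelfMap n Φ) (hζ : ζ ∈ closedPolydisc n) (i : Fin n) :
    ∃ j, ControlsSlice n Φ ζ i j := by
  rcases (hΦ.mapsTo_closedPolydisc hζ i).lt_or_eq with hi | hi
  · exact ⟨i, hΦ.controlsSlice_of_norm_lt_one hζ hi i⟩
  · obtain ⟨j, hj⟩ := hΦ.exists_jacEntry_ne_zero hζ hi
    exact ⟨j, hΦ.controlsSlice_of_jacEntry_ne_zero hζ hj⟩

lemma eventually_norm_apply_sub_apply_le (hΦ : IsC1SelfMap n Φ) (hζ : ζ ∈ closedPolydisc n)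
    (hdet : (jacMatrix n Φ ζ).det ≠ 0) :
    ∀ᶠ K : ℝ in Filter.atTop, ∀ᶠ U in (𝓝[polydisc n] ζ).smallSets, ∀ u i,
      (∀ l, 1 - ‖u l‖ ≤ 1 - ‖u i‖) → ∀ z ∈ whitneyPreimage n Φ u ∩ U,
        ∀ z' ∈ whitneyPreimage n Φ u ∩ U, ∀ k, ‖z k - z' k‖ ≤ K * (1 - ‖u i‖) := by
  obtain ⟨c, hc, hlow⟩ := hΦ.eventually_norm_sub_ge_of_det_ne_zero hζ hdet
  filter_upwards [Filter.eventually_ge_atTop (1 / c)] with K hK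
  rw [div_le_iff₀ hc] at hK
  filter_upwards [hlow] with U hU u i hmax z hz z' hz' k
  have hi (l : Fin n) := norm_apply_sub_apply_le_of_mem_whitneyPreimage hz.1 hz'.1 l
  have hu : 0 ≤ 1 - ‖u i‖ := (norm_nonneg _).trans (hi i)
  have hsup : ‖Φ z - Φ z'‖ ≤ 1 - ‖u i‖ :=
    (pi_norm_le_iff_of_nonneg hu).2 fun l => (hi l).trans (hmax l)
  refine (norm_le_pi_norm (z - z') k).trans (le_of_mul_le_mul_left ?_ hc)
  nlinarith [hU z hz.2 z' hz'.2, mul_le_mul_of_nonneg_right hK hu]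

end IsC1SelfMap

end CarlesonCondition

section BidiscCarleson

variable {Φ : (Fin 2 → ℂ) → Fin 2 → ℂ} {ζ : Fin 2 → ℂ} {β : ℝ}

lemma exists_nhds_isCarlesonOn_of_eventually_isSlicedBox (hβ : -1 < β)
    (hΦ : ContinuousOn Φ (polydisc 2)) {K : ℝ} (hK : 0 < K)
    (h : ∀ᶠ U in (𝓝[polydisc 2] ζ).smallSets, ∀ u, ∃ i i' j k : Fin 2, i ≠ i' ∧ j ≠ k ∧
      IsSlicedBox (whitneyPreimage 2 Φ u ∩ U) j k (K * (1 - ‖u i‖)) (K * (1 - ‖u i'‖))) :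
    ∃ V ∈ 𝓝 ζ, IsCarlesonOn 2 β Φ V := by
  obtain ⟨C, hC⟩ := exists_Vbeta_le_of_isSlicedBox hβ
  obtain ⟨s, hs, hbox⟩ := Filter.eventually_smallSets.1 h
  obtain ⟨V, hV, hζV, hVs⟩ := mem_nhdsWithin.1 hs
  refine ⟨V, hV.mem_nhds hζV, C * (K ^ (β + 2) * K ^ (β + 2)).toNNReal, fun u hu => ?_⟩
  obtain ⟨i, i', j, k, hi, hjk, hsliced⟩ := hbox (V ∩ polydisc 2) hVs u
  have hS : whitneyPreimage 2 Φ u ∩ V = whitneyPreimage 2 Φ u ∩ (V ∩ polydisc 2) := by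
    ext z
    exact ⟨fun hz => ⟨hz.1, hz.2, hz.1.1⟩, fun hz => ⟨hz.1, hz.2.1⟩⟩
  have hpos (l) : 0 < 1 - ‖u l‖ := sub_pos.2 (hu l)
  have hprod : ∏ l, (1 - ‖u l‖) ^ (β + 2) =
      (1 - ‖u i‖) ^ (β + 2) * (1 - ‖u i'‖) ^ (β + 2) := by
    rw [← Finset.prod_pair (f := fun l => (1 - ‖u l‖) ^ (β + 2)) hi]
    exact (Finset.prod_subset (Finset.subset_univ _) fun l => by simp; omega).symm
  rw [← hS] at hsliced
  refine (hC _ (fun z hz => hz.1.1) ((measurableSet_whitneyPreimage hΦ u).inter hV.measurableSet)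
    j k hjk _ _ (mul_pos hK (hpos i)) (mul_pos hK (hpos i')) hsliced).trans_eq ?_
  rw [Real.mul_rpow hK.le (hpos i).le, Real.mul_rpow hK.le (hpos i').le, hprod, ENNReal.coe_mul,
    ← ENNReal.ofReal, mul_mul_mul_comm, ENNReal.ofReal_mul (by positivity), mul_assoc]

lemma exists_nhds_isCarlesonOn_of_norm_lt_one (hβ : -1 < β) (hΦ : IsC1SelfMap 2 Φ)
    (hζ : ζ ∈ closedPolydisc 2) {i' : Fin 2} (hi' : ‖Φ ζ i'‖ < 1) :
    ∃ V ∈ 𝓝 ζ, IsCarlesonOn 2 β Φ V := by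
  obtain ⟨i, hi⟩ := exists_ne i'
  obtain ⟨j, hj⟩ := hΦ.exists_controlsSlice hζ i
  obtain ⟨k, hk⟩ := exists_ne j
  obtain ⟨K, hK, hslice, hint⟩ := ((Filter.eventually_gt_atTop 0).and
    (hj.and (hΦ.eventually_two_le_mul_one_sub_norm hζ hi'))).exists
  refine exists_nhds_isCarlesonOn_of_eventually_isSlicedBox hβ
    hΦ.differentiableOn.continuousOn hK ?_
  filter_upwards [hslice, hint] with U hU hUint u
  refine ⟨i, i', j, k, hi, hk.symm, fun z hz z' hz' hzk => ?_, fun z hz => (hU u z hz).1,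
    fun z hz z' hz' => ?_, fun z hz => (one_sub_norm_le_two _).trans (hUint u z hz)⟩
  · exact (hU u z hz).2 z' hz' fun l hl => by rwa [show l = k by omega]
  · exact (norm_apply_sub_apply_le_two hz.1.1 hz'.1.1 k).trans (hUint u z hz)

lemma exists_nhds_isCarlesonOn_of_det_ne_zero (hβ : -1 < β) (hΦ : IsC1SelfMap 2 Φ)
    (hζ : ζ ∈ closedPolydisc 2) (hdet : (jacMatrix 2 Φ ζ).det ≠ 0) :
    ∃ V ∈ 𝓝 ζ, IsCarlesonOn 2 β Φ V := by
  obtain ⟨σ, hσ⟩ := exists_perm_forall_ne_zero_of_det_ne_zero hdet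
  obtain ⟨K, hK, hslice, hdiam⟩ := ((Filter.eventually_gt_atTop 0).and
    ((Filter.eventually_all.2 fun i => hΦ.controlsSlice_of_jacEntry_ne_zero hζ (hσ i)).and
      (hΦ.eventually_norm_apply_sub_apply_le hζ hdet))).exists
  refine exists_nhds_isCarlesonOn_of_eventually_isSlicedBox hβ
    hΦ.differentiableOn.continuousOn hK ?_
  filter_upwards [Filter.eventually_all.2 hslice, hdiam] with U hU hUdiam u
  obtain ⟨i', hmax⟩ := Finite.exists_max fun i => 1 - ‖u i‖
  obtain ⟨i, hi⟩ := exists_ne i'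
  have hσi : σ i ≠ σ i' := σ.injective.ne hi
  refine ⟨i, i', σ i, σ i', hi, hσi, fun z hz z' hz' hzk => ?_, fun z hz => (hU i u z hz).1,
    fun z hz z' hz' => hUdiam u i' hmax z hz z' hz' _, fun z hz => (hU i' u z hz).1⟩
  exact (hU i u z hz).2 z' hz' fun l hl => by rwa [show l = σ i' by omega]

lemma isCarlesonOn_closedPolydisc_of_det_ne_zero (hβ : -1 < β) (hΦ : IsC1SelfMap 2 Φ)
    (hdet : ∀ ζ ∈ torus 2, Φ ζ ∈ torus 2 → (jacMatrix 2 Φ ζ).det ≠ 0) :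
    IsCarlesonOn 2 β Φ (closedPolydisc 2) := by
  refine isCarlesonOn_of_forall_exists_nhds fun ζ hζ => ?_
  by_cases hΦζ : Φ ζ ∈ torus 2
  · exact exists_nhds_isCarlesonOn_of_det_ne_zero hβ hΦ hζ
      (hdet ζ (hΦ.mem_torus_of_map_mem_torus hdet hζ hΦζ) hΦζ)
  · obtain ⟨i, hi⟩ : ∃ i, ‖Φ ζ i‖ ≠ 1 := not_forall.1 hΦζ
    exact exists_nhds_isCarlesonOn_of_norm_lt_one hβ hΦ hζ
      ((hΦ.mapsTo_closedPolydisc hζ i).lt_of_ne hi)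

end BidiscCarleson

section SubMeanValue

variable {E : Type*} [NormedAddCommGroup E] [NormedSpace ℂ E] [MeasurableSpace E] [BorelSpace E]

lemma mul_enorm_sq_le_lintegral_circleMap {h : ℂ → ℂ} (hh : DiffContOnCl ℂ h (ball 0 1)) :
    ENNReal.ofReal (2 * Real.pi) * ‖h 0‖ₑ ^ 2 ≤
      ∫⁻ θ in Ioc 0 (2 * Real.pi), ‖h (circleMap 0 1 θ)‖ₑ ^ 2 := by
  have hsq : DiffContOnCl ℂ (fun z => h z • h z) (ball 0 |(1 : ℝ)|) := by
    rw [abs_one]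
    exact hh.smul hh
  have hmean := hsq.circleAverage
  rw [Real.circleAverage_def, intervalIntegral.integral_of_le (by positivity),
    inv_smul_eq_iff₀ (by positivity)] at hmean
  have hnorm := enorm_integral_le_lintegral_enorm (μ := volume.restrict (Ioc 0 (2 * Real.pi)))
    fun θ => h (circleMap 0 1 θ) • h (circleMap 0 1 θ)
  rw [hmean, enorm_smul, Real.enorm_of_nonneg (by positivity)] at hnorm
  simpa [enorm_smul, sq] using hnorm

lemma enorm_sq_mul_measure_le_lintegral_of_balanced {μ : Measure E} [SFinite μ]
    (hμ : ∀ c : ℂ, ‖c‖ = 1 → MeasurePreserving (c • · : E → E) μ μ) {s : Set E}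
    (hs : MeasurableSet s) (hbal : Balanced ℂ s) {f : E → ℂ} (hf : DifferentiableOn ℂ f s) :
    ‖f 0‖ₑ ^ 2 * μ s ≤ ∫⁻ v in s, ‖f v‖ₑ ^ 2 ∂μ := by
  classical
  set F : E → ℝ≥0∞ := s.piecewise (fun v => ‖f v‖ₑ ^ 2) 0
  have hF : Measurable F :=
    ((ENNReal.continuous_pow 2).comp_continuousOn hf.continuousOn.enorm).measurable_piecewise
      continuousOn_const hs
  have hnorm (θ : ℝ) : ‖circleMap 0 1 θ‖ = 1 := by simp
  have hpoint : ∀ v ∈ s, ENNReal.ofReal (2 * Real.pi) * ‖f 0‖ₑ ^ 2 ≤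
      ∫⁻ θ in Ioc 0 (2 * Real.pi), F (circleMap 0 1 θ • v) := fun v hv => by
    have hline : DifferentiableOn ℂ (fun l : ℂ => f (l • v)) (closedBall 0 1) :=
      hf.comp (by fun_prop) fun l hl => hbal.smul_mem (mem_closedBall_zero_iff.1 hl) hv
    have hmean := mul_enorm_sq_le_lintegral_circleMap
      (hline.diffContOnCl_ball (U := closedBall 0 1) subset_rfl)
    simp only [zero_smul] at hmean
    refine hmean.trans_eq (lintegral_congr fun θ => ?_)
    simp only [F, piecewise_eq_of_mem s _ _ (hbal.smul_mem (hnorm θ).le hv)]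
  have hint : ∫⁻ v, F v ∂μ = ∫⁻ v in s, ‖f v‖ₑ ^ 2 ∂μ := by
    rw [← lintegral_indicator hs, ← piecewise_eq_indicator]
  have hrot : Measurable (Function.uncurry fun v θ => F (circleMap 0 1 θ • v)) :=
    hF.comp (((continuous_circleMap 0 1).comp continuous_snd).smul continuous_fst).measurable
  have hpos : ENNReal.ofReal (2 * Real.pi) ≠ 0 := by simp [Real.pi_pos]
  rw [← ENNReal.mul_le_mul_iff_right hpos ENNReal.ofReal_ne_top, ← mul_assoc]
  calc ENNReal.ofReal (2 * Real.pi) * ‖f 0‖ₑ ^ 2 * μ s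
      = ∫⁻ _ in s, ENNReal.ofReal (2 * Real.pi) * ‖f 0‖ₑ ^ 2 ∂μ := by rw [setLIntegral_const]
    _ ≤ ∫⁻ v, (∫⁻ θ in Ioc 0 (2 * Real.pi), F (circleMap 0 1 θ • v)) ∂μ :=
        (setLIntegral_mono' hs hpoint).trans (setLIntegral_le_lintegral _ _)
    _ = ∫⁻ θ in Ioc 0 (2 * Real.pi), ∫⁻ v, F (circleMap 0 1 θ • v) ∂μ :=
        lintegral_lintegral_swap hrot.aemeasurable
    _ = ENNReal.ofReal (2 * Real.pi) * ∫⁻ v in s, ‖f v‖ₑ ^ 2 ∂μ := by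
        simp_rw [(hμ _ (hnorm _)).lintegral_comp hF, hint]
        rw [setLIntegral_const, Real.volume_Ioc, sub_zero, mul_comm]

lemma enorm_sq_mul_measure_le_lintegral {μ : Measure E} [SFinite μ] [μ.IsAddLeftInvariant]
    (hμ : ∀ c : ℂ, ‖c‖ = 1 → MeasurePreserving (c • · : E → E) μ μ) {s : Set E}
    (hs : MeasurableSet s) {w : E} (hbal : Balanced ℂ ((w + ·) ⁻¹' s)) {f : E → ℂ}
    (hf : DifferentiableOn ℂ f s) : ‖f w‖ₑ ^ 2 * μ s ≤ ∫⁻ u in s, ‖f u‖ₑ ^ 2 ∂μ := by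
  rw [← (measurePreserving_add_left μ w).setLIntegral_comp_preimage_emb
    (measurableEmbedding_addLeft w), ← measure_preimage_add μ w s]
  simpa using enorm_sq_mul_measure_le_lintegral_of_balanced hμ (measurable_const_add w hs) hbal
    (f := fun v => f (w + v)) (hf.comp (by fun_prop) fun _ hv => hv)

lemma measurePreserving_smul_pi {ι : Type*} [Fintype ι] {c : ℂ} (hc : ‖c‖ = 1) :
    MeasurePreserving (c • · : (ι → ℂ) → ι → ℂ) volume volume :=
  volume_preserving_pi fun _ => (rotation ⟨c, mem_sphere_zero_iff_norm.2 hc⟩).measurePreserving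

end SubMeanValue

lemma lintegral_setLIntegral_swap {X Y : Type*} [MeasurableSpace X] [MeasurableSpace Y]
    {μ : Measure X} {ν : Measure Y} [SFinite μ] [SFinite ν] {R : Set (X × Y)}
    (hR : MeasurableSet R) {G : Y → ℝ≥0∞} (hG : AEMeasurable G ν) :
    ∫⁻ x, ∫⁻ y in {y | (x, y) ∈ R}, G y ∂ν ∂μ = ∫⁻ y, G y * μ {x | (x, y) ∈ R} ∂ν := by
  have hind := (hG.comp_snd (μ := μ)).indicator hR
  calc ∫⁻ x, ∫⁻ y in {y | (x, y) ∈ R}, G y ∂ν ∂μ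
      = ∫⁻ x, ∫⁻ y, R.indicator (fun p => G p.2) (x, y) ∂ν ∂μ := lintegral_congr fun x =>
        (lintegral_indicator (measurable_prodMk_left hR) G).symm
    _ = ∫⁻ y, ∫⁻ x, R.indicator (fun p => G p.2) (x, y) ∂μ ∂ν := lintegral_lintegral_swap hind
    _ = ∫⁻ y, G y * μ {x | (x, y) ∈ R} ∂ν := lintegral_congr fun y =>
        lintegral_indicator_const (measurable_prodMk_right hR) (G y)

section Bergman

variable {n : ℕ} {β : ℝ} {Φ : (Fin n → ℂ) → Fin n → ℂ} {f : (Fin n → ℂ) → ℂ} {z : Fin n → ℂ}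

lemma lintegral_Vbeta (hβ : -1 < β) (g : (Fin n → ℂ) → ℝ≥0∞) :
    ∫⁻ z, g z ∂Vbeta n β =
      ∫⁻ z in polydisc n, (∏ j, ENNReal.ofReal (diskDensity β (z j))) * g z := by
  rw [Vbeta, lintegral_withDensity_eq_lintegral_mul_non_measurable _ (by fun_prop)
    (.of_forall fun _ => ofReal_lt_top)]
  exact setLIntegral_congr_fun measurableSet_polydisc fun z hz =>
    congrArg (· * g z) (ofReal_prod_diskDensity hβ hz)

lemma bddBergman_iff_exists_lintegral_le :
    bddBergman n β Φ ↔ ∃ C : ℝ≥0, ∀ f : (Fin n → ℂ) → ℂ, DifferentiableOn ℂ f (polydisc n) →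
      ∫⁻ z, ‖f (Φ z)‖ₑ ^ 2 ∂Vbeta n β ≤ C * ∫⁻ z, ‖f z‖ₑ ^ 2 ∂Vbeta n β := by
  simp only [bddBergman, ENNReal.ofReal_pow (norm_nonneg _), ofReal_norm]
  constructor
  · rintro ⟨C, -, hC⟩
    exact ⟨C.toNNReal, hC⟩
  · rintro ⟨C, hC⟩
    refine ⟨C + 1, by positivity, fun f hf => (hC f hf).trans ?_⟩
    gcongr
    rw [← ENNReal.ofReal_coe_nnreal]
    exact ofReal_le_ofReal (by simp)

lemma norm_lt_one_and_le_of_mem_ball {w u : ℂ} (hw : ‖w‖ < 1) (hu : u ∈ ball w ((1 - ‖w‖) / 4)) :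
    ‖u‖ < 1 ∧ 1 - ‖u‖ ≤ 5 / 4 * (1 - ‖w‖) ∧ ‖w - u‖ ≤ (1 - ‖u‖) / 2 := by
  rw [mem_ball, dist_eq_norm] at hu
  have huw := norm_sub_norm_le u w
  have hwu := norm_sub_norm_le w u
  rw [norm_sub_rev w] at hwu ⊢
  exact ⟨by linarith, by linarith, by linarith⟩

lemma inv_volume_ball_le {w u : ℂ} (hw : ‖w‖ < 1) (hu : u ∈ ball w ((1 - ‖w‖) / 4)) :
    (volume (ball w ((1 - ‖w‖) / 4)))⁻¹ ≤ ENNReal.ofReal (25 / (Real.pi * (1 - ‖u‖) ^ 2)) := by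
  obtain ⟨hu₁, hle, -⟩ := norm_lt_one_and_le_of_mem_ball hw hu
  have hu₀ : 0 < 1 - ‖u‖ := by linarith
  have hr : 0 < (1 - ‖w‖) / 4 := by linarith
  rw [Complex.volume_ball, ← ENNReal.ofReal_coe_nnreal, NNReal.coe_real_pi,
    ← ENNReal.ofReal_pow hr.le, ← ENNReal.ofReal_mul (by positivity),
    ← ENNReal.ofReal_inv_of_pos (by positivity)]
  refine ofReal_le_ofReal ?_
  rw [inv_eq_one_div, div_le_div_iff₀ (by positivity)
    (mul_pos Real.pi_pos (pow_pos hu₀ 2)), one_mul]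
  have hsq : (1 - ‖u‖) ^ 2 ≤ (5 / 4 * (1 - ‖w‖)) ^ 2 := by gcongr
  calc Real.pi * (1 - ‖u‖) ^ 2 ≤ Real.pi * (5 / 4 * (1 - ‖w‖)) ^ 2 := by gcongr
    _ = 25 * (((1 - ‖w‖) / 4) ^ 2 * Real.pi) := by ring

lemma balanced_preimage_add_univ_pi_ball {w : Fin n → ℂ} {r : Fin n → ℝ} :
    Balanced ℂ ((w + ·) ⁻¹' univ.pi fun i => ball (w i) (r i)) := by
  refine balanced_iff_smul_mem.2 fun {a} ha {v} hv i _ => ?_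
  have hvi : ‖v i‖ < r i := by simpa using hv i trivial
  have hle : ‖a‖ * ‖v i‖ ≤ ‖v i‖ := mul_le_of_le_one_left (norm_nonneg _) ha
  simpa using hle.trans_lt hvi

lemma enorm_sq_map_le_lintegral_whitneyPreimage (hmaps : MapsTo Φ (polydisc n) (polydisc n))
    (hf : DifferentiableOn ℂ f (polydisc n)) (hz : z ∈ polydisc n) :
    ‖f (Φ z)‖ₑ ^ 2 ≤ ∫⁻ u in {u | z ∈ whitneyPreimage n Φ u},
      (∏ i, ENNReal.ofReal (25 / (Real.pi * (1 - ‖u i‖) ^ 2))) * ‖f u‖ₑ ^ 2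
        ∂volume.restrict (polydisc n) := by
  set w := Φ z
  have hw : ∀ i, ‖w i‖ < 1 := hmaps hz
  have hr (i : Fin n) : 0 < (1 - ‖w i‖) / 4 := by linarith [hw i]
  set s : Set (Fin n → ℂ) := univ.pi fun i => ball (w i) ((1 - ‖w i‖) / 4)
  have hs : MeasurableSet s := .univ_pi fun _ => measurableSet_ball
  have hsub : s ⊆ {u | z ∈ whitneyPreimage n Φ u} := fun u hu =>
    ⟨hz, fun i => (norm_lt_one_and_le_of_mem_ball (hw i) (hu i trivial)).2.2⟩
  have hsub' : s ⊆ polydisc n := fun u hu i =>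
    (norm_lt_one_and_le_of_mem_ball (hw i) (hu i trivial)).1
  have hvol : volume s = ∏ i, volume (ball (w i) ((1 - ‖w i‖) / 4)) := volume_pi_pi _
  have hpos : volume s ≠ 0 := by
    rw [hvol]
    exact Finset.prod_ne_zero_iff.2 fun i _ => (measure_ball_pos _ _ (hr i)).ne'
  have hfin : volume s ≠ ∞ := by
    rw [hvol]
    exact ENNReal.prod_ne_top fun i _ => measure_ball_lt_top.ne
  have hinv {u} (hu : u ∈ s) :
      (volume s)⁻¹ ≤ ∏ i, ENNReal.ofReal (25 / (Real.pi * (1 - ‖u i‖) ^ 2)) := by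
    rw [hvol, ENNReal.prod_inv_distrib fun i _ j _ _ => .inr (measure_ball_lt_top.ne)]
    exact Finset.prod_le_prod' fun i _ => inv_volume_ball_le (hw i) (hu i trivial)
  have hmean := enorm_sq_mul_measure_le_lintegral (fun c hc => measurePreserving_smul_pi hc) hs
    balanced_preimage_add_univ_pi_ball (hf.mono hsub')
  calc ‖f w‖ₑ ^ 2 ≤ (volume s)⁻¹ * ∫⁻ u in s, ‖f u‖ₑ ^ 2 := by
        rwa [mul_comm, ← div_eq_mul_inv, ENNReal.le_div_iff_mul_le (.inl hpos) (.inl hfin)]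
    _ = ∫⁻ u in s, (volume s)⁻¹ * ‖f u‖ₑ ^ 2 :=
        (lintegral_const_mul' _ _ (ENNReal.inv_ne_top.2 hpos)).symm
    _ ≤ ∫⁻ u in s, (∏ i, ENNReal.ofReal (25 / (Real.pi * (1 - ‖u i‖) ^ 2))) * ‖f u‖ₑ ^ 2 :=
        setLIntegral_mono' hs fun u hu => mul_le_mul_left (hinv hu) _
    _ ≤ _ := by
        rw [← Measure.restrict_restrict_of_subset hsub']
        exact lintegral_mono_set hsub

lemma rpow_one_sub_le_mul_rpow_one_sub_sq {t : ℝ} (h₀ : 0 ≤ t) (h₁ : t < 1) (β : ℝ) :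
    (1 - t) ^ β ≤ 2 ^ |β| * (1 - t ^ 2) ^ β := by
  have hone : 1 ≤ 2 ^ |β| * (1 + t) ^ β := by
    rcases le_total 0 β with hβ | hβ
    · exact one_le_mul_of_one_le_of_one_le (Real.one_le_rpow one_le_two (abs_nonneg β))
        (Real.one_le_rpow (by linarith) hβ)
    · rw [abs_of_nonpos hβ]
      simpa using one_le_rpow_mul_rpow_neg (x := 1 + t) (y := 2) (s := -β) (by linarith)
        (by linarith) (by linarith)
  calc (1 - t) ^ β ≤ (1 - t) ^ β * (2 ^ |β| * (1 + t) ^ β) :=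
        le_mul_of_one_le_right (Real.rpow_nonneg (by linarith) _) hone
    _ = 2 ^ |β| * ((1 - t) ^ β * (1 + t) ^ β) := by ring
    _ = 2 ^ |β| * (1 - t ^ 2) ^ β := by
        rw [← Real.mul_rpow (by linarith) (by linarith)]
        ring_nf

lemma ofReal_mul_rpow_le_diskDensity (hβ : -1 < β) {u : ℂ} (hu : ‖u‖ < 1) :
    ENNReal.ofReal (25 / (Real.pi * (1 - ‖u‖) ^ 2)) * ENNReal.ofReal ((1 - ‖u‖) ^ (β + 2)) ≤
      ENNReal.ofReal (25 * 2 ^ |β| / (β + 1)) * ENNReal.ofReal (diskDensity β u) := by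
  have hβ' : 0 < β + 1 := by linarith
  have hu₀ : 0 < 1 - ‖u‖ := by linarith
  rw [← ENNReal.ofReal_mul (by positivity), ← ENNReal.ofReal_mul (by positivity)]
  refine ofReal_le_ofReal ?_
  calc 25 / (Real.pi * (1 - ‖u‖) ^ 2) * (1 - ‖u‖) ^ (β + 2)
      = 25 / Real.pi * (1 - ‖u‖) ^ β := by
        rw [Real.rpow_add hu₀, Real.rpow_two]
        field_simp
    _ ≤ 25 / Real.pi * (2 ^ |β| * (1 - ‖u‖ ^ 2) ^ β) := by
        gcongr
        exact rpow_one_sub_le_mul_rpow_one_sub_sq (norm_nonneg u) hu β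
    _ = 25 * 2 ^ |β| / (β + 1) * diskDensity β u := by
        rw [diskDensity]
        field_simp

lemma bddBergman_of_isCarlesonOn (hβ : -1 < β) (hΦ : ContinuousOn Φ (polydisc n))
    (hmaps : MapsTo Φ (polydisc n) (polydisc n)) (hC : IsCarlesonOn n β Φ (closedPolydisc n)) :
    bddBergman n β Φ := by
  have := isFiniteMeasure_Vbeta n hβ
  obtain ⟨C, hC⟩ := hC
  set A : ℝ≥0 := (25 * 2 ^ |β| / (β + 1)).toNNReal
  set κ : (Fin n → ℂ) → ℝ≥0∞ := fun u => ∏ i, ENNReal.ofReal (25 / (Real.pi * (1 - ‖u i‖) ^ 2))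
  refine bddBergman_iff_exists_lintegral_le.2 ⟨C * A ^ n, fun f hf => ?_⟩
  have hmeas : AEMeasurable (fun u => κ u * ‖f u‖ₑ ^ 2) (volume.restrict (polydisc n)) :=
    (Measurable.aemeasurable (by fun_prop)).mul
      ((hf.continuousOn.aemeasurable measurableSet_polydisc).enorm.pow_const 2)
  have hpoint {u} (hu : u ∈ polydisc n) : κ u * Vbeta n β (whitneyPreimage n Φ u) ≤
      C * A ^ n * ∏ i, ENNReal.ofReal (diskDensity β (u i)) := by
    have hVu : Vbeta n β (whitneyPreimage n Φ u) ≤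
        C * ∏ i, ENNReal.ofReal ((1 - ‖u i‖) ^ (β + 2)) := by
      rw [← ENNReal.ofReal_prod_of_nonneg fun i _ => Real.rpow_nonneg (by linarith [hu i]) _]
      refine le_of_eq_of_le (congrArg _ (inter_eq_left.2 ?_).symm) (hC u hu)
      exact fun z hz => polydisc_subset_closedPolydisc hz.1
    calc κ u * Vbeta n β (whitneyPreimage n Φ u)
        ≤ κ u * (C * ∏ i, ENNReal.ofReal ((1 - ‖u i‖) ^ (β + 2))) := by gcongr
      _ = C * ∏ i, (ENNReal.ofReal (25 / (Real.pi * (1 - ‖u i‖) ^ 2)) *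
            ENNReal.ofReal ((1 - ‖u i‖) ^ (β + 2))) := by
          rw [Finset.prod_mul_distrib, mul_left_comm]
      _ ≤ C * ∏ i, (A * ENNReal.ofReal (diskDensity β (u i))) :=
          mul_le_mul_right
            (Finset.prod_le_prod' fun i _ => ofReal_mul_rpow_le_diskDensity hβ (hu i)) _
      _ = C * A ^ n * ∏ i, ENNReal.ofReal (diskDensity β (u i)) := by
          rw [Finset.prod_mul_distrib, Finset.prod_const, Finset.card_fin, mul_assoc]
  calc ∫⁻ z, ‖f (Φ z)‖ₑ ^ 2 ∂Vbeta n β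
      ≤ ∫⁻ z, ∫⁻ u in {u | z ∈ whitneyPreimage n Φ u}, κ u * ‖f u‖ₑ ^ 2
          ∂volume.restrict (polydisc n) ∂Vbeta n β :=
        lintegral_mono_ae <| (ae_Vbeta_mem_polydisc n β).mono fun z hz =>
          enorm_sq_map_le_lintegral_whitneyPreimage hmaps hf hz
    _ = ∫⁻ u in polydisc n, κ u * ‖f u‖ₑ ^ 2 * Vbeta n β (whitneyPreimage n Φ u) :=
        lintegral_setLIntegral_swap (measurableSet_mem_whitneyPreimage hΦ) hmeas
    _ ≤ ∫⁻ u in polydisc n, (C * A ^ n : ℝ≥0) *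
          ((∏ i, ENNReal.ofReal (diskDensity β (u i))) * ‖f u‖ₑ ^ 2) :=
        setLIntegral_mono' measurableSet_polydisc fun u hu => by
          rw [mul_right_comm, ← mul_assoc]
          push_cast
          exact mul_le_mul_left (hpoint hu) _
    _ = (C * A ^ n : ℝ≥0) * ∫⁻ z, ‖f z‖ₑ ^ 2 ∂Vbeta n β := by
        rw [lintegral_const_mul' _ _ coe_ne_top, lintegral_Vbeta hβ]

end Bergman

section CarlesonNecessity

variable {n : ℕ} {β : ℝ} {Φ : (Fin n → ℂ) → Fin n → ℂ} {a : Fin n → ℂ}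

/-- The `M`-th power of the Szegő kernel of the polydisc at `a`, up to a constant: the test
functions for Carleson measures. -/
def szegoPow (M : ℕ) (a w : Fin n → ℂ) : ℂ := ∏ i, ((1 - conj (a i) * w i) ^ M)⁻¹

lemma differentiableOn_szegoPow (M : ℕ) (ha : a ∈ polydisc n) :
    DifferentiableOn ℂ (szegoPow M a) (polydisc n) := by
  have hfactor (i : Fin n) : DifferentiableOn ℂ
      (fun w : Fin n → ℂ => ((1 - conj (a i) * w i) ^ M)⁻¹) (polydisc n) :=
    DifferentiableOn.inv (by fun_prop) fun w hw =>
      pow_ne_zero M (one_sub_conj_mul_ne_zero (ha i) (hw i).le)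
  exact fun w hw => (HasFDerivWithinAt.finsetProd fun i _ =>
    (hfactor i w hw).hasFDerivWithinAt).differentiableWithinAt

lemma enorm_szegoPow_sq (M : ℕ) (a w : Fin n → ℂ) :
    ‖szegoPow M a w‖ₑ ^ 2 = ∏ i, ENNReal.ofReal (‖1 - conj (a i) * w i‖ ^ (-(2 * M : ℝ))) := by
  rw [← ENNReal.ofReal_prod_of_nonneg fun i _ => by positivity, ← ofReal_norm,
    ← ENNReal.ofReal_pow (norm_nonneg _), szegoPow, norm_prod, ← Finset.prod_pow]
  refine congrArg _ (Finset.prod_congr rfl fun i _ => ?_)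
  rw [Real.rpow_neg (norm_nonneg _), norm_inv, norm_pow, inv_pow, ← pow_mul, mul_comm M]
  exact_mod_cast rfl

lemma exists_lintegral_enorm_szegoPow_sq_le (hβ : -1 < β) {M : ℕ} (hM : β + 2 ≤ M) :
    ∃ B : ℝ≥0, ∀ a ∈ polydisc n, ∫⁻ w, ‖szegoPow M a w‖ₑ ^ 2 ∂Vbeta n β ≤
      B * ∏ i, ENNReal.ofReal ((1 - ‖a i‖) ^ (β + 2 - 2 * M)) := by
  obtain ⟨B, hB⟩ := exists_lintegral_rpow_kernel_le hβ (s := 2 * M) (by linarith)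
  refine ⟨B ^ n, fun a ha => ?_⟩
  simp only [enorm_szegoPow_sq]
  rw [Vbeta_eq_pi n hβ, lintegral_pi_prod _
    (f := fun i w => ENNReal.ofReal (‖1 - conj (a i) * w‖ ^ (-(2 * M : ℝ)))) fun i => by fun_prop]
  refine (Finset.prod_le_prod' fun i _ => hB (a i) (ha i)).trans_eq ?_
  simp [Finset.prod_mul_distrib]

lemma exists_Vbeta_le_of_bddBergman (hβ : -1 < β) (hb : bddBergman n β Φ)
    (hmaps : MapsTo Φ (polydisc n) (polydisc n)) {R : ℝ} (hR : 0 < R) :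
    ∃ C : ℝ≥0, ∀ a ∈ polydisc n, ∀ t ⊆ polydisc n, MeasurableSet t →
      (∀ z ∈ t, ∀ i, ‖1 - conj (a i) * Φ z i‖ ≤ R * (1 - ‖a i‖)) →
        Vbeta n β t ≤ C * ∏ i, ENNReal.ofReal ((1 - ‖a i‖) ^ (β + 2)) := by
  obtain ⟨C, hC⟩ := bddBergman_iff_exists_lintegral_le.1 hb
  obtain ⟨M, hM⟩ := exists_nat_ge (β + 2)
  obtain ⟨B, hB⟩ := exists_lintegral_enorm_szegoPow_sq_le (n := n) hβ hM
  refine ⟨C * B * (R ^ (2 * M : ℝ)).toNNReal ^ n, fun a ha t ht htm hΦt => ?_⟩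
  have hd (i : Fin n) : 0 < 1 - ‖a i‖ := by linarith [ha i]
  set D : ℝ≥0∞ := ∏ i, ENNReal.ofReal ((R * (1 - ‖a i‖)) ^ (2 * M : ℝ))
  have hlower {z} (hz : z ∈ t) : 1 ≤ D * ‖szegoPow M a (Φ z)‖ₑ ^ 2 := by
    rw [enorm_szegoPow_sq, ← Finset.prod_mul_distrib]
    refine Finset.one_le_prod' fun i _ => ?_
    rw [← ENNReal.ofReal_mul (Real.rpow_nonneg (mul_pos hR (hd i)).le _), ENNReal.one_le_ofReal]
    exact one_le_rpow_mul_rpow_neg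
      (norm_pos_iff.2 (one_sub_conj_mul_ne_zero (ha i) (hmaps (ht hz) i).le)) (hΦt z hz i)
      (by positivity)
  have hweight (i : Fin n) : ENNReal.ofReal ((R * (1 - ‖a i‖)) ^ (2 * M : ℝ)) *
      ENNReal.ofReal ((1 - ‖a i‖) ^ (β + 2 - 2 * M)) =
        ENNReal.ofReal (R ^ (2 * M : ℝ)) * ENNReal.ofReal ((1 - ‖a i‖) ^ (β + 2)) := by
    rw [← ENNReal.ofReal_mul (Real.rpow_nonneg (mul_pos hR (hd i)).le _),
      ← ENNReal.ofReal_mul (Real.rpow_nonneg hR.le _), Real.mul_rpow hR.le (hd i).le, mul_assoc,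
      ← Real.rpow_add (hd i), add_sub_cancel]
  have hD : D ≠ ∞ := ENNReal.prod_ne_top fun i _ => ofReal_ne_top
  calc Vbeta n β t = ∫⁻ _ in t, 1 ∂Vbeta n β := (setLIntegral_one t).symm
    _ ≤ ∫⁻ z, D * ‖szegoPow M a (Φ z)‖ₑ ^ 2 ∂Vbeta n β :=
        (setLIntegral_mono' htm fun z hz => hlower hz).trans (setLIntegral_le_lintegral _ _)
    _ = D * ∫⁻ z, ‖szegoPow M a (Φ z)‖ₑ ^ 2 ∂Vbeta n β := lintegral_const_mul' _ _ hD
    _ ≤ D * (C * (B * ∏ i, ENNReal.ofReal ((1 - ‖a i‖) ^ (β + 2 - 2 * M)))) := by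
        gcongr
        exact (hC _ (differentiableOn_szegoPow M ha)).trans (mul_le_mul_right (hB a ha) _)
    _ = C * B * ∏ i, (ENNReal.ofReal ((R * (1 - ‖a i‖)) ^ (2 * M : ℝ)) *
          ENNReal.ofReal ((1 - ‖a i‖) ^ (β + 2 - 2 * M))) := by
        rw [Finset.prod_mul_distrib]
        ring
    _ = _ := by
        simp only [hweight, Finset.prod_mul_distrib, Finset.prod_const, Finset.card_fin]
        rw [ENNReal.coe_mul, ENNReal.coe_mul, ENNReal.coe_pow, ENNReal.ofNNReal_toNNReal]
        ring

end CarlesonNecessity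

section DegenerateDirection

variable {n : ℕ} {Φ : (Fin n → ℂ) → Fin n → ℂ} {ζ : Fin n → ℂ} {i j : Fin n}

namespace IsC1SelfMap

lemma norm_jacEntry_le_re (hΦ : IsC1SelfMap n Φ) (hζ : ζ ∈ closedPolydisc n) (hi : ‖Φ ζ i‖ = 1) :
    ‖jacEntry n Φ ζ i j‖ ≤ (conj (Φ ζ i) * jacEntry n Φ ζ i j * ζ j).re := by
  set b : ℂ := conj (Φ ζ i) * jacEntry n Φ ζ i j with hb
  have hbnorm : ‖b‖ = ‖jacEntry n Φ ζ i j‖ := by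
    rw [hb, norm_mul, RCLike.norm_conj, hi, one_mul]
  obtain ⟨ω, hω, hbω⟩ := Complex.exists_norm_eq_mul_self b
  -- `Re (conj (Φ ζ i) * Φ i)` is maximal at `ζ`, so its derivative is nonpositive in each direction
  -- pointing into the closed polydisc.
  set ℓ : (Fin n → ℂ) →L[ℝ] ℝ :=
    Complex.reCLM ∘L ContinuousLinearMap.mul ℝ ℂ (conj (Φ ζ i)) ∘L ContinuousLinearMap.proj i
  have hmax : IsLocalMaxOn (fun z => ℓ (Φ z)) (closedPolydisc n) ζ := by
    refine IsMaxOn.localize fun z hz => ?_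
    calc (conj (Φ ζ i) * Φ z i).re ≤ ‖conj (Φ ζ i) * Φ z i‖ := Complex.re_le_norm _
      _ ≤ 1 := by
          rw [norm_mul, RCLike.norm_conj, hi, one_mul]
          exact hΦ.mapsTo_closedPolydisc hz i
      _ = (conj (Φ ζ i) * Φ ζ i).re := by simp [Complex.conj_mul', hi]
  have hsegment := convex_closedPolydisc.segment_subset hζ
    (update_mem_closedPolydisc (k := j) hζ hω.le)
  have hnonpos := hmax.hasFDerivWithinAt_nonpos
    (ℓ.hasFDerivAt.comp_hasFDerivWithinAt ζ (hΦ.hasFDerivWithinAt hζ))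
    (sub_mem_posTangentConeAt_of_segment_subset hsegment)
  have hdir : Function.update ζ j ω - ζ = Pi.single j (ω - ζ j) := by
    ext l
    rcases eq_or_ne l j with rfl | hl <;> simp [*]
  have hvalue : ℓ (fderivWithin ℝ Φ (closedPolydisc n) ζ (Pi.single j (ω - ζ j))) =
      ‖b‖ - (b * ζ j).re := by
    change (conj (Φ ζ i) * fderivWithin ℝ Φ _ ζ (Pi.single j (ω - ζ j)) i).re = _
    rw [hΦ.fderivWithin_single hζ, ← mul_assoc, ← hb, mul_sub, mul_comm b ω, ← hbω, Complex.sub_re,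
      Complex.ofReal_re]
  rw [hdir, ContinuousLinearMap.comp_apply, hvalue, sub_nonpos] at hnonpos
  rwa [← hbnorm]

lemma conj_mul_jacEntry_mul_eq_norm (hΦ : IsC1SelfMap n Φ) (hζ : ζ ∈ torus n)
    (hi : ‖Φ ζ i‖ = 1) : conj (Φ ζ i) * jacEntry n Φ ζ i j * ζ j = ‖jacEntry n Φ ζ i j‖ := by
  set x : ℂ := conj (Φ ζ i) * jacEntry n Φ ζ i j * ζ j
  have hx : ‖x‖ = ‖jacEntry n Φ ζ i j‖ := by
    simp only [x, norm_mul, RCLike.norm_conj, hi, hζ j, one_mul, mul_one]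
  have hre : x.re = ‖x‖ := le_antisymm (Complex.re_le_norm x)
    (hx ▸ hΦ.norm_jacEntry_le_re (torus_subset_closedPolydisc hζ) hi)
  rw [← hx]
  exact Complex.eq_coe_norm_of_nonneg (Complex.re_eq_norm.1 hre)

lemma exists_mulVec_eq_zero_of_det_eq_zero (hΦ : IsC1SelfMap n Φ) (hζ : ζ ∈ torus n)
    (hΦζ : Φ ζ ∈ torus n) (hdet : (jacMatrix n Φ ζ).det = 0) :
    ∃ v : Fin n → ℝ, ‖v‖ = 1 ∧ (jacMatrix n Φ ζ).mulVec (fun j => ζ j * v j) = 0 := by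
  set A : Matrix (Fin n) (Fin n) ℝ := .of fun i j => ‖jacEntry n Φ ζ i j‖
  have hA : A.map Complex.ofRealHom =
      Matrix.diagonal (fun i => conj (Φ ζ i)) * jacMatrix n Φ ζ * Matrix.diagonal ζ := by
    ext i j
    rw [Matrix.mul_diagonal, Matrix.diagonal_mul]
    exact (hΦ.conj_mul_jacEntry_mul_eq_norm hζ (hΦζ i)).symm
  have hdetA : A.det = 0 := by
    rw [← Complex.ofReal_eq_zero, ← Complex.ofRealHom_eq_coe, RingHom.map_det,
      RingHom.mapMatrix_apply, hA, Matrix.det_mul, Matrix.det_mul, hdet, mul_zero, zero_mul]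
  obtain ⟨v, hv, hAv⟩ := Matrix.exists_mulVec_eq_zero_iff.2 hdetA
  refine ⟨‖v‖⁻¹ • v, norm_smul_inv_norm hv, funext fun i => ?_⟩
  have hAu : ∑ j, ‖jacEntry n Φ ζ i j‖ * (‖v‖⁻¹ • v) j = 0 := by
    have := congrFun (A.mulVec_smul ‖v‖⁻¹ v) i
    rw [hAv, smul_zero] at this
    exact this
  have hΦζi : conj (Φ ζ i) ≠ 0 := by
    rw [← norm_ne_zero_iff, RCLike.norm_conj, hΦζ i]
    exact one_ne_zero
  refine (mul_eq_zero.1 ?_).resolve_left hΦζi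
  calc conj (Φ ζ i) * ∑ j, jacEntry n Φ ζ i j * (ζ j * ((‖v‖⁻¹ • v) j : ℝ))
      = ∑ j, conj (Φ ζ i) * jacEntry n Φ ζ i j * ζ j * ((‖v‖⁻¹ • v) j : ℝ) := by
        rw [Finset.mul_sum]
        exact Finset.sum_congr rfl fun j _ => by ring
    _ = ((∑ j, ‖jacEntry n Φ ζ i j‖ * (‖v‖⁻¹ • v) j : ℝ) : ℂ) := by
        simp only [hΦ.conj_mul_jacEntry_mul_eq_norm hζ (hΦζ i)]
        push_cast
        rfl
    _ = 0 := by rw [hAu, Complex.ofReal_zero]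

end IsC1SelfMap

end DegenerateDirection

section TangentialBoxes

variable {n : ℕ} {β δ τ : ℝ} {x w : ℂ} {ζ : Fin n → ℂ}

/-- A ball in the unit disc near the boundary point `x`, displaced from `x` by `τ` in the tangential
direction. Its points have depth comparable to `δ` as long as `τ ^ 2 ≤ δ`. -/
def tangentialBall (x : ℂ) (δ τ : ℝ) : Set ℂ := ball (x * (1 - 4 * δ - Complex.I * τ)) (δ / 4)

lemma one_sub_norm_sq_mem_Icc_of_mem_tangentialBall (hx : ‖x‖ = 1) (hδ : δ ∈ Ioc 0 (1 / 9))
    (hτ : τ ^ 2 ≤ δ) (hw : w ∈ tangentialBall x δ τ) : 1 - ‖w‖ ^ 2 ∈ Icc δ (10 * δ) := by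
  obtain ⟨hδ₀, hδ₁⟩ := hδ
  set c : ℂ := x * (1 - 4 * δ - Complex.I * τ)
  have hc : ‖c‖ ^ 2 = (1 - 4 * δ) ^ 2 + τ ^ 2 := by
    rw [norm_mul, hx, one_mul, Complex.sq_norm, Complex.normSq_apply]
    simp [sq]
  have hwc : |‖w‖ - ‖c‖| < δ / 4 :=
    (abs_norm_sub_norm_le w c).trans_lt (mem_ball_iff_norm.1 hw)
  obtain ⟨hlow, hup⟩ := abs_lt.1 hwc
  have hc₁ : ‖c‖ ≤ 1 := by
    rw [← sq_le_one_iff₀ (norm_nonneg c), hc]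
    nlinarith
  constructor <;> nlinarith [norm_nonneg w, norm_nonneg c, sq_nonneg τ]

lemma norm_lt_one_of_mem_tangentialBall (hx : ‖x‖ = 1) (hδ : δ ∈ Ioc 0 (1 / 9))
    (hτ : τ ^ 2 ≤ δ) (hw : w ∈ tangentialBall x δ τ) : ‖w‖ < 1 := by
  rw [← sq_lt_one_iff₀ (norm_nonneg w)]
  linarith [(one_sub_norm_sq_mem_Icc_of_mem_tangentialBall hx hδ hτ hw).1, hδ.1]

lemma norm_sub_add_le_of_mem_tangentialBall (hx : ‖x‖ = 1) (hδ : 0 < δ)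
    (hw : w ∈ tangentialBall x δ τ) : ‖w - x + x * (Complex.I * τ)‖ ≤ 5 * δ := by
  have hsplit : w - x + x * (Complex.I * τ) =
      (w - x * (1 - 4 * δ - Complex.I * τ)) - x * (4 * δ : ℝ) := by
    push_cast
    ring
  rw [hsplit]
  refine (norm_sub_le _ _).trans ?_
  rw [norm_mul, hx, one_mul, Complex.norm_of_nonneg (by positivity)]
  linarith [mem_ball_iff_norm.1 hw]

lemma norm_sub_sq_le_of_mem_tangentialBall (hx : ‖x‖ = 1) (hδ : δ ∈ Ioc 0 (1 / 9))
    (hτ : τ ^ 2 ≤ δ) (hw : w ∈ tangentialBall x δ τ) : ‖w - x‖ ^ 2 ≤ 8 * δ := by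
  have htri : ‖w - x‖ ≤ 5 * δ + |τ| := by
    have := norm_sub_le (w - x + x * (Complex.I * τ)) (x * (Complex.I * τ))
    rw [add_sub_cancel_right, norm_mul x, hx, one_mul, norm_mul, Complex.norm_I, one_mul,
      Complex.norm_real, Real.norm_eq_abs] at this
    linarith [norm_sub_add_le_of_mem_tangentialBall hx hδ.1 hw]
  calc ‖w - x‖ ^ 2 ≤ (5 * δ + |τ|) ^ 2 := by gcongr
    _ ≤ 2 * ((5 * δ) ^ 2 + |τ| ^ 2) := add_sq_le
    _ ≤ 8 * δ := by
        rw [sq_abs]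
        nlinarith [hδ.1, hδ.2]

lemma min_one_rpow_mul_le_rpow {y C : ℝ} (hδ : 0 < δ) (hC : 0 ≤ C) (hy : y ∈ Icc δ (C * δ)) :
    min 1 (C ^ β) * δ ^ β ≤ y ^ β := by
  rcases le_total 0 β with hβ | hβ
  · exact (mul_le_of_le_one_left (by positivity) (min_le_left _ _)).trans
      (Real.rpow_le_rpow hδ.le hy.1 hβ)
  · calc min 1 (C ^ β) * δ ^ β ≤ C ^ β * δ ^ β := by
          gcongr
          exact min_le_right _ _
      _ = (C * δ) ^ β := (Real.mul_rpow hC hδ.le).symm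
      _ ≤ y ^ β := Real.rpow_le_rpow_of_nonpos (hδ.trans_le hy.1) hy.2 hβ

lemma exists_le_diskMeasure_tangentialBall (hβ : -1 < β) :
    ∃ c : ℝ≥0, c ≠ 0 ∧ ∀ x : ℂ, ‖x‖ = 1 → ∀ δ ∈ Ioc (0 : ℝ) (1 / 9), ∀ τ : ℝ, τ ^ 2 ≤ δ →
      c * ENNReal.ofReal (δ ^ (β + 2)) ≤ diskMeasure β (tangentialBall x δ τ) := by
  have hβ₁ : 0 < β + 1 := by linarith
  set m : ℝ := min 1 (10 ^ β)
  have hm : 0 < m := lt_min one_pos (by positivity)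
  refine ⟨((β + 1) * m / 16).toNNReal, (Real.toNNReal_pos.2 (by positivity)).ne',
    fun x hx δ hδ τ hτ => ?_⟩
  have hδ₀ := hδ.1
  have hsub : tangentialBall x δ τ ⊆ ball 0 1 := fun w hw =>
    mem_ball_zero_iff.2 (norm_lt_one_of_mem_tangentialBall hx hδ hτ hw)
  have hmeas : MeasurableSet (tangentialBall x δ τ) := measurableSet_ball
  have hdensity {w} (hw : w ∈ tangentialBall x δ τ) :
      (β + 1) * (m * δ ^ β) / Real.pi ≤ diskDensity β w := by
    unfold diskDensity
    gcongr
    exact min_one_rpow_mul_le_rpow hδ₀ (by norm_num)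
      (one_sub_norm_sq_mem_Icc_of_mem_tangentialBall hx hδ hτ hw)
  have hvol : volume (tangentialBall x δ τ) = ENNReal.ofReal (Real.pi * (δ / 4) ^ 2) := by
    rw [tangentialBall, Complex.volume_ball, ← ENNReal.ofReal_pow (by positivity),
      ENNReal.ofReal_mul Real.pi_pos.le, mul_comm, ← NNReal.coe_real_pi, ENNReal.ofReal_coe_nnreal]
  calc ENNReal.ofReal ((β + 1) * m / 16) * ENNReal.ofReal (δ ^ (β + 2))
      = ENNReal.ofReal ((β + 1) * (m * δ ^ β) / Real.pi) * volume (tangentialBall x δ τ) := by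
        rw [hvol, ← ENNReal.ofReal_mul (by positivity), ← ENNReal.ofReal_mul (by positivity),
          Real.rpow_add hδ₀, Real.rpow_two]
        congr 1
        field_simp
        norm_num
    _ = ∫⁻ _ in tangentialBall x δ τ, ENNReal.ofReal ((β + 1) * (m * δ ^ β) / Real.pi) :=
        (setLIntegral_const _ _).symm
    _ ≤ ∫⁻ w in tangentialBall x δ τ, ENNReal.ofReal (diskDensity β w) :=
        setLIntegral_mono' hmeas fun w hw => ENNReal.ofReal_le_ofReal (hdensity hw)
    _ = diskMeasure β (tangentialBall x δ τ) := by
        rw [diskMeasure, withDensity_apply _ hmeas, Measure.restrict_restrict hmeas,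
          inter_eq_left.2 hsub]

/-- The product of tangential balls at the boundary points `ζ j` with displacements `τ j`. -/
def tangentialBox (ζ : Fin n → ℂ) (δ : ℝ) (τ : Fin n → ℝ) : Set (Fin n → ℂ) :=
  univ.pi fun j => tangentialBall (ζ j) δ (τ j)

lemma measurableSet_tangentialBox (ζ : Fin n → ℂ) (δ : ℝ) (τ : Fin n → ℝ) :
    MeasurableSet (tangentialBox ζ δ τ) :=
  MeasurableSet.univ_pi fun _ => measurableSet_ball

lemma tangentialBox_subset_polydisc (hζ : ζ ∈ torus n) (hδ : δ ∈ Ioc 0 (1 / 9))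
    {τ : Fin n → ℝ} (hτ : ∀ j, τ j ^ 2 ≤ δ) : tangentialBox ζ δ τ ⊆ polydisc n := fun _ hz j =>
  norm_lt_one_of_mem_tangentialBall (hζ j) hδ (hτ j) (hz j (mem_univ j))

lemma exists_le_Vbeta_tangentialBox (n : ℕ) (hβ : -1 < β) :
    ∃ c : ℝ≥0, c ≠ 0 ∧ ∀ ζ ∈ torus n, ∀ δ ∈ Ioc (0 : ℝ) (1 / 9), ∀ τ : Fin n → ℝ,
      (∀ j, τ j ^ 2 ≤ δ) →
        c * ENNReal.ofReal (δ ^ (β + 2)) ^ n ≤ Vbeta n β (tangentialBox ζ δ τ) := by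
  obtain ⟨c, hc, hball⟩ := exists_le_diskMeasure_tangentialBall hβ
  refine ⟨c ^ n, pow_ne_zero n hc, fun ζ hζ δ hδ τ hτ => ?_⟩
  rw [Vbeta_eq_pi n hβ, tangentialBox, Measure.pi_pi, ENNReal.coe_pow, ← mul_pow]
  simpa using Finset.prod_le_prod' (s := Finset.univ)
    fun j _ => hball (ζ j) (hζ j) δ hδ (τ j) (hτ j)

lemma disjoint_tangentialBox (hζ : ζ ∈ torus n) (hδ : 0 < δ) {τ τ' : Fin n → ℝ}
    (hτ : δ ≤ ‖τ - τ'‖) : Disjoint (tangentialBox ζ δ τ) (tangentialBox ζ δ τ') := by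
  refine Set.disjoint_left.2 fun z hz hz' => hτ.not_gt ((pi_norm_lt_iff hδ).2 fun j => ?_)
  have hcentres : (z j - ζ j * (1 - 4 * δ - Complex.I * τ' j)) -
      (z j - ζ j * (1 - 4 * δ - Complex.I * τ j)) =
        -(ζ j * (Complex.I * ((τ j - τ' j : ℝ) : ℂ))) := by
    push_cast
    ring
  have htri := norm_sub_le (z j - ζ j * (1 - 4 * δ - Complex.I * τ' j))
    (z j - ζ j * (1 - 4 * δ - Complex.I * τ j))
  rw [hcentres, norm_neg, norm_mul, norm_mul, hζ j, Complex.norm_I, one_mul, one_mul,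
    Complex.norm_real] at htri
  rw [Pi.sub_apply]
  linarith [mem_ball_iff_norm.1 (hz j (mem_univ j)), mem_ball_iff_norm.1 (hz' j (mem_univ j))]

end TangentialBoxes

section Necessity

variable {n : ℕ} {β δ : ℝ} {Φ : (Fin n → ℂ) → Fin n → ℂ} {ζ : Fin n → ℂ} {v : Fin n → ℝ}

/-- The union of `N` tangential boxes at `ζ` with displacements equally spaced along `v`. -/
def tangentialTrain (ζ : Fin n → ℂ) (v : Fin n → ℝ) (δ : ℝ) (N : ℕ) : Set (Fin n → ℂ) :=
  ⋃ k ∈ Finset.range N, tangentialBox ζ δ ((k * δ : ℝ) • v)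

lemma sq_smul_apply_le {N k : ℕ} (hv : ‖v‖ = 1) (hδ : 0 < δ) (hN : N ^ 2 * δ ≤ 1) (hk : k < N)
    (j : Fin n) : ((k * δ : ℝ) • v) j ^ 2 ≤ δ := by
  have hvj : v j ^ 2 ≤ 1 := by
    rw [sq_le_one_iff_abs_le_one, ← hv]
    exact norm_le_pi_norm v j
  have hkN : (k : ℝ) ^ 2 ≤ N ^ 2 := by gcongr
  calc ((k * δ : ℝ) • v) j ^ 2 = k ^ 2 * δ * δ * v j ^ 2 := by
        rw [Pi.smul_apply, smul_eq_mul]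
        ring
    _ ≤ N ^ 2 * δ * δ * 1 := by gcongr
    _ ≤ δ := by nlinarith

lemma exists_le_Vbeta_tangentialTrain (n : ℕ) (hβ : -1 < β) :
    ∃ c : ℝ≥0, c ≠ 0 ∧ ∀ ζ ∈ torus n, ∀ v : Fin n → ℝ, ‖v‖ = 1 → ∀ δ ∈ Ioc (0 : ℝ) (1 / 9),
      ∀ N : ℕ, N ^ 2 * δ ≤ 1 →
        N * (c * ENNReal.ofReal (δ ^ (β + 2)) ^ n) ≤ Vbeta n β (tangentialTrain ζ v δ N) := by
  obtain ⟨c, hc, hbox⟩ := exists_le_Vbeta_tangentialBox n hβ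
  refine ⟨c, hc, fun ζ hζ v hv δ hδ N hN => ?_⟩
  have hdisj : ((Finset.range N : Finset ℕ) : Set ℕ).PairwiseDisjoint
      fun k : ℕ => tangentialBox ζ δ ((k * δ : ℝ) • v) := by
    intro k _ l _ hkl
    refine disjoint_tangentialBox hζ hδ.1 ?_
    have hkl' : (1 : ℝ) ≤ |(k : ℝ) - l| := by
      exact_mod_cast Int.one_le_abs (sub_ne_zero.2 (Nat.cast_injective.ne hkl) : (k - l : ℤ) ≠ 0)
    rw [← sub_smul, ← sub_mul, norm_smul, hv, mul_one, norm_mul, Real.norm_of_nonneg hδ.1.le]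
    exact le_mul_of_one_le_left hδ.1.le hkl'
  rw [tangentialTrain,
    measure_biUnion_finset hdisj fun k _ => measurableSet_tangentialBox ζ δ _]
  simpa using Finset.card_nsmul_le_sum (Finset.range N) _ _ fun k hk =>
    hbox ζ hζ δ hδ _ (sq_smul_apply_le hv hδ.1 hN (Finset.mem_range.1 hk))

lemma norm_one_sub_conj_mul_le_norm_sub_add {b w : ℂ} (hb : ‖b‖ = 1) (hw : ‖w‖ ≤ 1) (hδ : 0 ≤ δ) :
    ‖1 - conj ((1 - δ : ℝ) * b) * w‖ ≤ ‖w - b‖ + δ := by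
  have hsplit : 1 - conj ((1 - δ : ℝ) * b) * w = (δ : ℂ) * (conj b * w) - conj b * (w - b) := by
    have hbb : conj b * b = 1 := by simp [Complex.conj_mul', hb]
    rw [map_mul, Complex.conj_ofReal]
    push_cast
    linear_combination -hbb
  rw [hsplit]
  refine (norm_sub_le _ _).trans ?_
  rw [norm_mul, norm_mul, norm_mul, RCLike.norm_conj, hb, Complex.norm_of_nonneg hδ, one_mul,
    one_mul, add_comm]
  gcongr
  exact mul_le_of_le_one_right hδ hw

namespace IsC1SelfMap

lemma exists_norm_sub_le_of_mem_tangentialBox (hΦ : IsC1SelfMap n Φ)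
    (hsm : ContDiffOn ℝ 2 Φ (closedPolydisc n)) (hζ : ζ ∈ torus n)
    (hv : (jacMatrix n Φ ζ).mulVec (fun j => ζ j * v j) = 0) :
    ∃ C ≥ 0, ∀ δ ∈ Ioc (0 : ℝ) (1 / 9), ∀ t : ℝ, (∀ j, (t • v) j ^ 2 ≤ δ) →
      ∀ z ∈ tangentialBox ζ δ (t • v), ‖Φ z - Φ ζ‖ ≤ C * δ := by
  have hζ' := torus_subset_closedPolydisc hζ
  obtain ⟨K, hK⟩ := exists_norm_sub_sub_fderivWithin_le_sq isCompact_closedPolydisc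
    convex_closedPolydisc uniqueDiffOn_closedPolydisc hsm
  set D := fderivWithin ℝ Φ (closedPolydisc n) ζ
  refine ⟨|K| * 8 + ‖D‖ * 5, by positivity, fun δ hδ t ht z hz => ?_⟩
  have hδ₀ := hδ.1
  set p : Fin n → ℂ := (Complex.I * t) • fun j => ζ j * v j with hp
  have hDp : D p = 0 := by
    rw [hp, hΦ.fderivWithin_smul hζ', hΦ.fderivWithin_eq_mulVec hζ', hv, smul_zero]
  have hnormal : ‖z - ζ + p‖ ≤ 5 * δ := by
    refine (pi_norm_le_iff_of_nonneg (by positivity)).2 fun j => ?_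
    have hcoord : (z - ζ + p) j = z j - ζ j + ζ j * (Complex.I * ((t • v) j : ℝ)) := by
      simp only [hp, Pi.add_apply, Pi.sub_apply, Pi.smul_apply, smul_eq_mul, Complex.ofReal_mul]
      ring
    rw [hcoord]
    exact norm_sub_add_le_of_mem_tangentialBall (hζ j) hδ₀ (hz j (mem_univ j))
  have hdist : ‖z - ζ‖ ^ 2 ≤ 8 * δ := by
    refine (Real.le_sqrt (norm_nonneg _) (by positivity)).1
      ((pi_norm_le_iff_of_nonneg (by positivity)).2 fun j => Real.le_sqrt_of_sq_le ?_)
    exact norm_sub_sq_le_of_mem_tangentialBall (hζ j) hδ (ht j) (hz j (mem_univ j))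
  have hzpoly := polydisc_subset_closedPolydisc (tangentialBox_subset_polydisc hζ hδ ht hz)
  calc ‖Φ z - Φ ζ‖ = ‖(Φ z - Φ ζ - D (z - ζ)) + D (z - ζ + p)‖ := by
        rw [map_add, hDp, add_zero, sub_add_cancel]
    _ ≤ |K| * ‖z - ζ‖ ^ 2 + ‖D‖ * ‖z - ζ + p‖ := by
        refine (norm_add_le _ _).trans (add_le_add ((hK ζ hζ' z hzpoly).trans ?_) (D.le_opNorm _))
        gcongr
        exact le_abs_self K
    _ ≤ |K| * (8 * δ) + ‖D‖ * (5 * δ) := by gcongr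
    _ = _ := by ring

lemma exists_Vbeta_tangentialTrain_le (hβ : -1 < β) (hΦ : IsC1SelfMap n Φ)
    (hsm : ContDiffOn ℝ 2 Φ (closedPolydisc n)) (hb : bddBergman n β Φ) (hζ : ζ ∈ torus n)
    (hΦζ : Φ ζ ∈ torus n) (hv : ‖v‖ = 1)
    (hJv : (jacMatrix n Φ ζ).mulVec (fun j => ζ j * v j) = 0) :
    ∃ C : ℝ≥0, ∀ δ ∈ Ioc (0 : ℝ) (1 / 9), ∀ N : ℕ, N ^ 2 * δ ≤ 1 →
      Vbeta n β (tangentialTrain ζ v δ N) ≤ C * ENNReal.ofReal (δ ^ (β + 2)) ^ n := by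
  obtain ⟨C, hC, hnear⟩ := hΦ.exists_norm_sub_le_of_mem_tangentialBox hsm hζ hJv
  obtain ⟨B, hB⟩ := exists_Vbeta_le_of_bddBergman hβ hb hΦ.mapsTo (R := C + 1) (by positivity)
  refine ⟨B, fun δ hδ N hN => ?_⟩
  have hδ₀ := hδ.1
  set a : Fin n → ℂ := fun i => (1 - δ : ℝ) * Φ ζ i
  have ha (i : Fin n) : 1 - ‖a i‖ = δ := by
    rw [norm_mul, hΦζ i, Complex.norm_of_nonneg (by linarith [hδ.2]), mul_one, sub_sub_self]
  have hsub {k} (hk : k ∈ Finset.range N) := tangentialBox_subset_polydisc hζ hδ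
    (sq_smul_apply_le hv hδ₀ hN (Finset.mem_range.1 hk))
  have hbound := hB a (fun i => by linarith [ha i]) (tangentialTrain ζ v δ N)
    (iUnion₂_subset fun k hk => hsub hk)
    (Finset.measurableSet_biUnion _ fun k _ => measurableSet_tangentialBox ζ δ _) fun z hz i => ?_
  · simpa [ha] using hbound
  obtain ⟨k, hk, hzk⟩ := mem_iUnion₂.1 hz
  have hzi := (norm_le_pi_norm (Φ z - Φ ζ) i).trans (hnear δ hδ (k * δ)
    (sq_smul_apply_le hv hδ₀ hN (Finset.mem_range.1 hk)) z hzk)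
  rw [Pi.sub_apply] at hzi
  rw [ha]
  linarith [norm_one_sub_conj_mul_le_norm_sub_add (hΦζ i) (hΦ.mapsTo (hsub hk hzk) i).le hδ₀.le]

theorem det_jacMatrix_ne_zero_of_bddBergman (hβ : -1 < β) (hΦ : IsC1SelfMap n Φ)
    (hsm : ContDiffOn ℝ 2 Φ (closedPolydisc n)) (hb : bddBergman n β Φ) (hζ : ζ ∈ torus n)
    (hΦζ : Φ ζ ∈ torus n) : (jacMatrix n Φ ζ).det ≠ 0 := by
  intro hdet
  obtain ⟨v, hv, hJv⟩ := hΦ.exists_mulVec_eq_zero_of_det_eq_zero hζ hΦζ hdet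
  obtain ⟨C, hC⟩ := hΦ.exists_Vbeta_tangentialTrain_le hβ hsm hb hζ hΦζ hv hJv
  obtain ⟨c, hc, hbig⟩ := exists_le_Vbeta_tangentialTrain n hβ
  obtain ⟨N, hN⟩ := exists_nat_gt (max 3 (C / c : ℝ≥0))
  obtain ⟨hN₃, hNC⟩ := max_lt_iff.1 hN
  have hN₃' : (3 : ℝ) < N := by exact_mod_cast hN₃
  have hδ : ((N : ℝ) ^ 2)⁻¹ ∈ Ioc (0 : ℝ) (1 / 9) := by
    refine ⟨by positivity, ?_⟩
    rw [one_div]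
    exact inv_anti₀ (by norm_num) (by nlinarith)
  have hNδ : (N : ℝ) ^ 2 * ((N : ℝ) ^ 2)⁻¹ ≤ 1 := mul_inv_le_one
  have hle := (hbig ζ hζ v hv _ hδ N hNδ).trans (hC _ hδ N hNδ)
  rw [← mul_assoc, ENNReal.mul_le_mul_iff_left
    (pow_ne_zero n (ENNReal.ofReal_pos.2 (Real.rpow_pos_of_pos hδ.1 _)).ne')
    (ENNReal.pow_ne_top ofReal_ne_top)] at hle
  have hle' : N * c ≤ C := by exact_mod_cast hle
  exact hle'.not_gt ((div_lt_iff₀ (pos_iff_ne_zero.2 hc)).1 hNC)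

end IsC1SelfMap

end Necessity

theorem bidisc_bergman_criterion (φ : (Fin 2 → ℂ) → (Fin 2 → ℂ))
    (hhol : DifferentiableOn ℂ φ (polydisc 2))
    (hsm : ContDiffOn ℝ 2 φ (closedPolydisc 2))
    (hmap : ∀ z ∈ polydisc 2, φ z ∈ polydisc 2)
    (β : ℝ) (hβ : -1 < β) :
    bddBergman 2 β φ ↔
      ∀ ζ ∈ torus 2, φ ζ ∈ torus 2 →
        Matrix.det (Matrix.of fun i j => jacEntry 2 φ ζ i j) ≠ 0 := by
  have hφ : IsC1SelfMap 2 φ := ⟨hhol, hsm.of_le (by norm_num), hmap⟩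
  constructor
  · intro hb ζ hζ hφζ
    exact hφ.det_jacMatrix_ne_zero_of_bddBergman hβ hsm hb hζ hφζ
  · intro hdet
    exact bddBergman_of_isCarlesonOn hβ hhol.continuousOn hmap
      (isCarlesonOn_closedPolydisc_of_det_ne_zero hβ hφ hdet)

end
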